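/- arXiv:2107.00711 — 4 statements merged into one kernel-verified Lean document; each statement's English description precedes it below -/
import Mathlib

section
/- Every finite game has a Nash equilibrium in mixed strategies: if I is a nonempty finite set of players, each player i has a nonempty finite strategy set S i, and each player i has a payoff function u i : (Π j, S j) → ℝ, then there exists a mixed strategy profile σ (for each player i, a function σ i : S i → ℝ with nonnegative values summing to 1) such that for every player i and every mixed strategy τ : S i → ℝ with nonnegative values summing to 1, the expected payoff to i under σ is at least the expected payoff to i under the profile obtained from σ by replacing σ i with τ. -/
namespace NashAux

variable {I X : Type} [Fintype I] [DecidableEq I] [Fintype X] [DecidableEq X]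

def Dom (r : I → X → ℕ) (σ : Finset X) : Prop := ∀ y, ∃ i, ∀ x ∈ σ, r i y ≤ r i x

theorem Dom.mono {r : I → X → ℕ} {σ τ : Finset X} (h : Dom r σ) (hs : τ ⊆ σ) : Dom r τ := by
  intro y
  obtain ⟨i, hi⟩ := h y
  exact ⟨i, fun x hx => hi x (hs hx)⟩

/-- Rooms containing a fixed inner door. -/
theorem inner_door (r : I → X → ℕ) (hr : ∀ i, Function.Injective (r i)) (a : I → X)
    (h1 : ∀ i x, r i (a i) ≤ r i x)
    (h2 : ∀ i j t, j ≠ i → t ∉ Set.range a → r i t < r i (a j))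
    (τ : Finset X) (hd : Dom r τ) (hc : τ.card + 1 = Fintype.card I)
    (t : X) (ht : t ∈ τ) (hta : t ∉ Set.range a) :
    ∃ y z, y ≠ z ∧ y ∉ τ ∧ z ∉ τ ∧ Dom r (insert y τ) ∧ Dom r (insert z τ) ∧
      ∀ w, w ∉ τ → Dom r (insert w τ) → w = y ∨ w = z := by
  classical
  have hm : ∀ k, ∃ x ∈ τ, ∀ x' ∈ τ, r k x ≤ r k x' := fun k =>
    Finset.exists_min_image τ (r k) ⟨t, ht⟩
  choose m hmτ hmin using hm
  have hsurj : ∀ x ∈ τ, ∃ k, m k = x := by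
    intro x hx
    obtain ⟨k, hk⟩ := hd x
    exact ⟨k, hr k (le_antisymm (hmin k x hx) (hk _ (hmτ k)))⟩
  obtain ⟨i, -, j, -, hij, hmij⟩ : ∃ i ∈ (Finset.univ : Finset I), ∃ j ∈ (Finset.univ : Finset I),
      i ≠ j ∧ m i = m j := by
    apply Finset.exists_ne_map_eq_of_card_lt_of_maps_to (t := τ)
    · rw [Finset.card_univ]; omega
    · intro k _; exact hmτ k
  -- existence for each index whose removal keeps surjectivity
  have hex : ∀ k, (∀ x ∈ τ, ∃ l, l ≠ k ∧ m l = x) → ∃ y, y ∉ τ ∧ Dom r (insert y τ) ∧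
      (∀ l, l ≠ k → r l (m l) < r l y) ∧
      (∀ z, (∀ l, l ≠ k → r l (m l) < r l z) → r k z ≤ r k y) := by
    intro k hk
    have hne : (Finset.univ.filter fun y => ∀ l, l ≠ k → r l (m l) < r l y).Nonempty := by
      refine ⟨a k, ?_⟩
      simp only [Finset.mem_filter, Finset.mem_univ, true_and]
      intro l hl
      exact lt_of_le_of_lt (hmin l t ht) (h2 l k t hl.symm hta)
    obtain ⟨y, hy, hymax⟩ := Finset.exists_max_image _ (r k) hne
    simp only [Finset.mem_filter, Finset.mem_univ, true_and] at hy hymax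
    refine ⟨y, ?_, ?_, hy, hymax⟩
    · intro hyτ
      obtain ⟨l, hl, hl'⟩ := hk y hyτ
      have := hy l hl
      rw [hl'] at this
      exact lt_irrefl _ this
    · intro z
      by_cases hz : ∀ l, l ≠ k → r l (m l) < r l z
      · refine ⟨k, ?_⟩
        obtain ⟨l, hl⟩ := hd z
        have hlk : l = k := by
          by_contra hlk
          exact absurd (hl _ (hmτ l)) (not_le.2 (hz l hlk))
        subst hlk
        intro x hx
        rcases Finset.mem_insert.1 hx with rfl | hx
        · exact hymax z hz
        · exact hl x hx
      · push Not at hz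
        obtain ⟨l, hl, hz⟩ := hz
        refine ⟨l, ?_⟩
        intro x hx
        rcases Finset.mem_insert.1 hx with rfl | hx
        · exact hz.trans (hy l hl).le
        · exact hz.trans (hmin l x hx)
  have hsi : ∀ x ∈ τ, ∃ l, l ≠ i ∧ m l = x := by
    intro x hx
    obtain ⟨k, hk⟩ := hsurj x hx
    by_cases h : k = i
    · exact ⟨j, hij.symm, by rw [← hmij, ← h, hk]⟩
    · exact ⟨k, h, hk⟩
  have hsj : ∀ x ∈ τ, ∃ l, l ≠ j ∧ m l = x := by
    intro x hx
    obtain ⟨k, hk⟩ := hsurj x hx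
    by_cases h : k = j
    · exact ⟨i, hij, by rw [hmij, ← h, hk]⟩
    · exact ⟨k, h, hk⟩
  obtain ⟨y, hyτ, hyD, hy, hymax⟩ := hex i hsi
  obtain ⟨z, hzτ, hzD, hz, hzmax⟩ := hex j hsj
  refine ⟨y, z, ?_, hyτ, hzτ, hyD, hzD, ?_⟩
  · rintro rfl
    obtain ⟨l, hl⟩ := hd y
    have hl := hl _ (hmτ l)
    by_cases h : l = i
    · exact absurd hl (not_le.2 (hz l (by rw [h]; exact hij)))
    · exact absurd hl (not_le.2 (hy l h))
  · intro w hw hwD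
    obtain ⟨k, hk⟩ := hwD w
    -- every x in τ is a minimum for an index other than k
    have hx : ∀ x ∈ τ, ∃ l, l ≠ k ∧ m l = x := by
      intro x hx
      obtain ⟨l, hl⟩ := hwD x
      refine ⟨l, ?_, hr l (le_antisymm (hmin l x hx) (hl _ (Finset.mem_insert_of_mem (hmτ l))))⟩
      rintro rfl
      have e1 := hl w (Finset.mem_insert_self _ _)
      have e2 := hk x (Finset.mem_insert_of_mem hx)
      have := hr l (le_antisymm e1 e2)
      exact hw (this ▸ hx)
    have himg : (Finset.univ.erase k).image m = τ := by
      ext x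
      simp only [Finset.mem_image, Finset.mem_erase, Finset.mem_univ, and_true]
      constructor
      · rintro ⟨l, _, rfl⟩; exact hmτ l
      · exact hx x
    have hinj : Set.InjOn m (Finset.univ.erase k : Finset I) := by
      rw [← Finset.card_image_iff, himg, Finset.card_erase_of_mem (Finset.mem_univ _),
        Finset.card_univ]
      omega
    have hkij : k = i ∨ k = j := by
      by_contra hcon
      push Not at hcon
      exact hij (hinj (by simpa using hcon.1.symm) (by simpa using hcon.2.symm) hmij)
    have hwM : ∀ l, l ≠ k → r l (m l) < r l w := by
      intro l hl
      obtain ⟨l', hl'⟩ := hwD (m l)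
      by_contra hcon
      push Not at hcon
      -- m l is min in τ for some index; card counting
      have hl'k : l' ≠ k := by
        rintro rfl
        have e1 := hl' w (Finset.mem_insert_self _ _)
        have e2 := hk (m l) (Finset.mem_insert_of_mem (hmτ l))
        exact hw (hr l' (le_antisymm e1 e2) ▸ hmτ l)
      have : m l' = m l := hr l' (le_antisymm (hmin l' _ (hmτ l))
        (hl' _ (Finset.mem_insert_of_mem (hmτ l'))))
      have hll : l' = l := hinj (by simpa using hl'k) (by simpa using hl) this
      subst hll
      have e1 := hl' w (Finset.mem_insert_self _ _)
      exact hw (hr l' (le_antisymm e1 hcon) ▸ hmτ l')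
    have hwmax : ∀ z, (∀ l, l ≠ k → r l (m l) < r l z) → r k z ≤ r k w := by
      intro z hz
      obtain ⟨l, hl⟩ := hwD z
      by_cases h : l = k
      · subst h; exact hl w (Finset.mem_insert_self _ _)
      · exact absurd (hl _ (Finset.mem_insert_of_mem (hmτ l))) (not_le.2 (hz l h))
    rcases hkij with rfl | rfl
    · left; exact hr k (le_antisymm (hymax w hwM) (hwmax y hy))
    · right; exact hr k (le_antisymm (hzmax w hwM) (hwmax z hz))

theorem outer_door (r : I → X → ℕ) (hr : ∀ i, Function.Injective (r i)) (a : I → X)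
    (h1 : ∀ i x, r i (a i) ≤ r i x)
    (h2 : ∀ i j t, j ≠ i → t ∉ Set.range a → r i t < r i (a j))
    (t : X) (hta : t ∉ Set.range a) (i : I) :
    ∃ y, y ∉ (Finset.univ.erase i).image a ∧ Dom r (insert y ((Finset.univ.erase i).image a)) ∧
      ∀ w, w ∉ (Finset.univ.erase i).image a →
        Dom r (insert w ((Finset.univ.erase i).image a)) → w = y := by
  classical
  obtain ⟨y, hy, hymax⟩ := Finset.exists_max_image
    (Finset.univ.filter fun x => x ∉ Set.range a) (r i) ⟨t, by simpa using hta⟩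
  simp only [Finset.mem_filter, Finset.mem_univ, true_and] at hy hymax
  have key : ∀ x, x ∉ Set.range a → ∀ k, ¬ r k x ≤ r k (a k) := by
    intro x hx k h
    exact hx ⟨k, hr k (le_antisymm (h1 k x) h)⟩
  have hmem : ∀ k, k ≠ i → a k ∈ (Finset.univ.erase i).image a := fun k hk =>
    Finset.mem_image_of_mem _ (by simpa using hk)
  refine ⟨y, ?_, ?_, ?_⟩
  · intro h
    obtain ⟨k, _, hk⟩ := Finset.mem_image.1 h
    exact hy ⟨k, hk⟩
  · intro z
    by_cases hz : z ∈ Set.range a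
    · obtain ⟨k, rfl⟩ := hz
      exact ⟨k, fun x _ => h1 k x⟩
    · refine ⟨i, fun x hx => ?_⟩
      rcases Finset.mem_insert.1 hx with rfl | hx
      · exact hymax z hz
      · obtain ⟨k, hk, rfl⟩ := Finset.mem_image.1 hx
        exact (h2 i k z (by simpa using hk) hz).le
  · intro w hw hwD
    have hdom : ∀ z, z ∉ Set.range a → r i z ≤ r i w := by
      intro z hz
      obtain ⟨k, hk⟩ := hwD z
      by_cases h : k = i
      · subst h; exact hk w (Finset.mem_insert_self _ _)
      · exact absurd (hk _ (Finset.mem_insert_of_mem (hmem k h))) (key z hz k)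
    have hwa : w ∉ Set.range a := by
      rintro ⟨k, rfl⟩
      by_cases h : k = i
      · subst h; exact key t hta k (hdom t hta)
      · exact hw (hmem k h)
    exact hr i (le_antisymm (hymax w hwa) (hdom y hy))

theorem scarf (r : I → X → ℕ) (hr : ∀ i, Function.Injective (r i)) (a : I → X)
    (h1 : ∀ i x, r i (a i) ≤ r i x)
    (h2 : ∀ i j t, j ≠ i → t ∉ Set.range a → r i t < r i (a j))
    (t : X) (hta : t ∉ Set.range a) (i : I) (c : X → I) (hca : ∀ i, c (a i) = i) :
    ∃ σ : Finset X, Dom r σ ∧ σ.image c = Finset.univ := by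
  classical
  by_contra hcon
  push Not at hcon
  have hI : 0 < Fintype.card I := Fintype.card_pos_iff.2 ⟨i⟩
  have hainj : Function.Injective a := Function.LeftInverse.injective hca
  let R : Finset (Finset X) := Finset.univ.filter fun σ => Dom r σ ∧ σ.card = Fintype.card I
  let D : Finset (Finset X) := Finset.univ.filter fun τ => Dom r τ ∧
    τ.card + 1 = Fintype.card I ∧ τ.image c = Finset.univ.erase i
  have hRm : ∀ σ, σ ∈ R ↔ Dom r σ ∧ σ.card = Fintype.card I := by intro σ; simp [R]
  have hDm : ∀ τ, τ ∈ D ↔ Dom r τ ∧ τ.card + 1 = Fintype.card I ∧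
    τ.image c = Finset.univ.erase i := by intro σ; simp [D]
  have hcount := Finset.sum_card_bipartiteAbove_eq_sum_card_bipartiteBelow
    (s := D) (t := R) (fun τ σ => τ ⊆ σ)
  -- rooms have an even number of doors
  have heven : ∀ σ ∈ R, Even (D.bipartiteBelow (fun τ σ => τ ⊆ σ) σ).card := by
    intro σ hσ
    obtain ⟨hσD, hσc⟩ := (hRm σ).1 hσ
    rcases Finset.eq_empty_or_nonempty (D.bipartiteBelow (fun τ σ => τ ⊆ σ) σ) with he | ⟨τ, hτ⟩
    · rw [he]; simp
    · obtain ⟨hτD, hτσ⟩ := (Finset.mem_bipartiteBelow _).1 hτ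
      obtain ⟨hd, hc, him⟩ := (hDm τ).1 hτD
      obtain ⟨x, hx, rfl⟩ : ∃ x, x ∉ τ ∧ insert x τ = σ := by
        have := Finset.exists_eq_insert_iff.2 ⟨hτσ, by omega⟩
        obtain ⟨x, hx, h⟩ := this
        exact ⟨x, hx, h⟩
      have hinj : Set.InjOn c τ := by
        rw [← Finset.card_image_iff, him, Finset.card_erase_of_mem (Finset.mem_univ _),
          Finset.card_univ]
        omega
      have hcx : c x ∈ τ.image c := by
        rw [him]
        simp only [Finset.mem_erase, Finset.mem_univ, and_true]
        intro hcx
        apply hcon _ hσD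
        rw [Finset.image_insert, him, hcx, Finset.insert_erase (Finset.mem_univ _)]
      obtain ⟨x', hx', hcx'⟩ := Finset.mem_image.1 hcx
      have hxx : x ≠ x' := by rintro rfl; exact hx hx'
      have hset : D.bipartiteBelow (fun τ σ => τ ⊆ σ) (insert x τ) =
          {τ, (insert x τ).erase x'} := by
        ext ρ
        rw [Finset.mem_bipartiteBelow, hDm, Finset.mem_insert, Finset.mem_singleton]
        constructor
        · rintro ⟨⟨_, hρc, hρi⟩, hρ⟩
          obtain ⟨v, hv, hvρ⟩ := Finset.exists_eq_insert_iff.2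
            ⟨hρ, by rw [hσc]; exact hρc⟩
          have hρe : ρ = (insert x τ).erase v := by rw [← hvρ, Finset.erase_insert hv]
          have hvm : v ∈ insert x τ := by rw [← hvρ]; exact Finset.mem_insert_self _ _
          rcases Finset.mem_insert.1 hvm with rfl | hvτ
          · left; rw [hρe, Finset.erase_insert hx]
          · right
            have hvx : v = x' := by
              by_contra hne
              have : c v ∈ ρ.image c := by
                rw [hρi, ← him]; exact Finset.mem_image_of_mem _ hvτ
              obtain ⟨w, hw, hwv⟩ := Finset.mem_image.1 this
              have hwv' : w ≠ v := by rintro rfl; exact hv hw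
              rcases Finset.mem_insert.1 (hρ hw) with rfl | hwτ
              · exact hne (hinj hvτ hx' (by rw [← hwv, hcx']))
              · exact hwv' (hinj hwτ hvτ hwv)
            rw [hρe, hvx]
        · rintro (rfl | rfl)
          · exact ⟨⟨hd, hc, him⟩, hτσ⟩
          · refine ⟨⟨hσD.mono (Finset.erase_subset _ _), ?_, ?_⟩, Finset.erase_subset _ _⟩
            · rw [Finset.card_erase_of_mem (Finset.mem_insert_of_mem hx'), hσc]; omega
            · rw [← him]
              ext k
              simp only [Finset.mem_image, Finset.mem_erase, Finset.mem_insert]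
              constructor
              · rintro ⟨w, ⟨hw, rfl | hw'⟩, rfl⟩
                · exact ⟨x', hx', hcx'⟩
                · exact ⟨w, hw', rfl⟩
              · rintro ⟨w, hw, rfl⟩
                by_cases hwx : w = x'
                · subst hwx; exact ⟨x, ⟨hxx, Or.inl rfl⟩, hcx'.symm⟩
                · exact ⟨w, ⟨hwx, Or.inr hw⟩, rfl⟩
      rw [hset, Finset.card_pair]
      · exact even_two
      · intro h
        have : x' ∈ (insert x τ).erase x' := by rw [← h]; exact hx'
        simp at this
  let τ₀ := (Finset.univ.erase i).image a
  have hτ₀c : τ₀.card + 1 = Fintype.card I := by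
    rw [Finset.card_image_of_injective _ hainj, Finset.card_erase_of_mem (Finset.mem_univ _),
      Finset.card_univ]; omega
  -- rooms above a door
  have habove : ∀ τ, τ.card + 1 = Fintype.card I → ∀ σ,
      σ ∈ R.bipartiteAbove (fun τ σ => τ ⊆ σ) τ ↔ ∃ w, w ∉ τ ∧ Dom r (insert w τ) ∧
        σ = insert w τ := by
    intro τ hτ σ
    rw [Finset.mem_bipartiteAbove, hRm]
    constructor
    · rintro ⟨⟨h, h'⟩, h''⟩
      obtain ⟨w, hw, rfl⟩ := Finset.exists_eq_insert_iff.2 ⟨h'', by omega⟩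
      exact ⟨w, hw, h, rfl⟩
    · rintro ⟨w, hw, h, rfl⟩
      exact ⟨⟨h, by rw [Finset.card_insert_of_notMem hw, hτ]⟩, Finset.subset_insert _ _⟩
  have hinj' : ∀ (τ : Finset X) v w, v ∉ τ → w ∉ τ → insert v τ = insert w τ → v = w := by
    intro τ v w hv hw h
    have : v ∈ insert w τ := by rw [← h]; exact Finset.mem_insert_self _ _
    rcases Finset.mem_insert.1 this with h | h
    · exact h
    · exact absurd h hv
  obtain ⟨y, hy, hyD, hyu⟩ := outer_door r hr a h1 h2 t hta i
  have hτ₀D : τ₀ ∈ D := by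
    rw [hDm]
    refine ⟨hyD.mono (Finset.subset_insert _ _), hτ₀c, ?_⟩
    rw [Finset.image_image]
    ext k
    simp [hca]
  have hout : (R.bipartiteAbove (fun τ σ => τ ⊆ σ) τ₀).card = 1 := by
    rw [Finset.card_eq_one]
    refine ⟨insert y τ₀, ?_⟩
    ext σ
    rw [habove τ₀ hτ₀c, Finset.mem_singleton]
    constructor
    · rintro ⟨w, hw, h, rfl⟩
      rw [hyu w hw h]
    · rintro rfl
      exact ⟨y, hy, hyD, rfl⟩
  have hin : ∀ τ ∈ D.erase τ₀, Even (R.bipartiteAbove (fun τ σ => τ ⊆ σ) τ).card := by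
    intro τ hτ
    obtain ⟨hne, hτD⟩ := Finset.mem_erase.1 hτ
    obtain ⟨hd, hc, him⟩ := (hDm τ).1 hτD
    obtain ⟨s, hs, hsa⟩ : ∃ s ∈ τ, s ∉ Set.range a := by
      by_contra hall
      push Not at hall
      apply hne
      apply Finset.eq_of_subset_of_card_le
      · intro x hx
        obtain ⟨k, rfl⟩ := hall x hx
        have : c (a k) ∈ τ.image c := Finset.mem_image_of_mem _ hx
        rw [him, hca] at this
        exact Finset.mem_image_of_mem _ this
      · omega
    obtain ⟨v, w, hvw, hv, hw, hvD, hwD, hu⟩ := inner_door r hr a h1 h2 τ hd hc s hs hsa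
    have : R.bipartiteAbove (fun τ σ => τ ⊆ σ) τ = {insert v τ, insert w τ} := by
      ext σ
      rw [habove τ hc, Finset.mem_insert, Finset.mem_singleton]
      constructor
      · rintro ⟨x, hx, h, rfl⟩
        rcases hu x hx h with rfl | rfl
        · left; rfl
        · right; rfl
      · rintro (rfl | rfl)
        · exact ⟨v, hv, hvD, rfl⟩
        · exact ⟨w, hw, hwD, rfl⟩
    rw [this, Finset.card_pair]
    · exact even_two
    · intro h; exact hvw (hinj' τ v w hv hw h)
  rw [← Finset.add_sum_erase _ _ hτ₀D, hout] at hcount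
  have e1 := Finset.even_sum _ hin
  have e2 := Finset.even_sum _ heven
  rw [← hcount] at e2
  rw [add_comm, Nat.even_add_one] at e2
  exact e2 e1

theorem scarf' {I T : Type} [Fintype I] [DecidableEq I] [Fintype T] [DecidableEq T] [Nonempty I]
    [Nonempty T] (f : I → T → ℕ) (c : T → I) :
    ∃ (C : Finset I) (σ : Finset T), (∀ i ∈ C, ∃ x ∈ σ, c x = i) ∧
      ∀ y, ∃ i ∈ C, ∀ x ∈ σ, f i y ≤ f i x := by
  classical
  let e := Fintype.equivFin T
  let e' := Fintype.equivFin I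
  let M := Fintype.card T
  let g : I → T → ℕ := fun i t => f i t * M + e t + 1
  have hg : ∀ i x y, g i x ≤ g i y → f i x ≤ f i y := by
    intro i x y h
    by_contra hlt
    push Not at hlt
    have h1 : (f i y + 1) * M ≤ f i x * M := Nat.mul_le_mul_right _ hlt
    have h2 : (e y : ℕ) < M := (e y).2
    simp only [g] at h
    rw [add_mul] at h1
    omega
  have hginj : ∀ i, Function.Injective (g i) := by
    intro i x y h
    have hf : f i x = f i y := le_antisymm (hg _ _ _ h.le) (hg _ _ _ h.ge)
    simp only [g, hf] at h
    exact e.injective (Fin.ext (by omega))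
  let B := ∑ i, ∑ t, g i t
  have hB : ∀ i t, g i t ≤ B := fun i t =>
    (Finset.single_le_sum (f := fun t => g i t) (fun _ _ => Nat.zero_le _)
      (Finset.mem_univ t)).trans
      (Finset.single_le_sum (f := fun i => ∑ t, g i t) (fun _ _ => Nat.zero_le _)
        (Finset.mem_univ i))
  let r : I → T ⊕ I → ℕ := fun i => Sum.elim (g i) fun j => if j = i then 0 else B + 1 + e' j
  have hrl : ∀ i t, r i (Sum.inl t) = g i t := fun _ _ => rfl
  have hrr : ∀ i j, r i (Sum.inr j) = if j = i then 0 else B + 1 + e' j := fun _ _ => rfl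
  obtain ⟨t⟩ := ‹Nonempty T›
  obtain ⟨i₀⟩ := ‹Nonempty I›
  obtain ⟨σ, hσ, hσc⟩ := scarf r (by
      intro i x y h
      rcases x with x | x <;> rcases y with y | y
      · rw [hrl, hrl] at h; rw [hginj i h]
      · rw [hrl, hrr] at h
        have := hB i x
        have : 0 < g i x := Nat.succ_pos _
        split_ifs at h <;> omega
      · rw [hrl, hrr] at h
        have := hB i y
        have : 0 < g i y := Nat.succ_pos _
        split_ifs at h <;> omega
      · rw [hrr, hrr] at h
        congr 1
        split_ifs at h with h1 h2 h2
        · rw [h1, h2]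
        · omega
        · omega
        · exact e'.injective (Fin.ext (by omega)))
    Sum.inr (by intro i x; rw [hrr, if_pos rfl]; exact Nat.zero_le _)
    (by
      intro i j s hj hs
      rcases s with s | s
      · rw [hrl, hrr, if_neg hj]
        have := hB i s
        omega
      · exact absurd ⟨s, rfl⟩ hs)
    (Sum.inl t) (by simp) i₀ (Sum.elim c id) (fun _ => rfl)
  refine ⟨Finset.univ.filter fun i => Sum.inr i ∉ σ, Finset.univ.filter fun t => Sum.inl t ∈ σ,
    ?_, ?_⟩
  · intro i hi
    have hi : Sum.inr i ∉ σ := by simpa using hi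
    have : i ∈ σ.image (Sum.elim c id) := by rw [hσc]; exact Finset.mem_univ _
    obtain ⟨x, hx, hxi⟩ := Finset.mem_image.1 this
    rcases x with x | x
    · exact ⟨x, by simpa using hx, hxi⟩
    · have : x = i := hxi
      subst this
      exact absurd hx hi
  · intro y
    obtain ⟨i, hi⟩ := hσ (Sum.inl y)
    refine ⟨i, ?_, ?_⟩
    · simp only [Finset.mem_filter, Finset.mem_univ, true_and]
      intro h
      have := hi _ h
      rw [hrl, hrr, if_pos rfl] at this
      have : 0 < g i y := Nat.succ_pos _
      omega
    · intro x hx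
      exact hg _ _ _ (hi (Sum.inl x) (by simpa using hx))

theorem grid {K : Type} [Fintype K] [DecidableEq K] [Nonempty K] (N : ℕ)
    (c : {x : K → Fin (N + 1) // ∑ k, (x k : ℕ) = N} → K) :
    ∃ p : {x : K → Fin (N + 1) // ∑ k, (x k : ℕ) = N}, ∀ i,
      ∃ q : {x : K → Fin (N + 1) // ∑ k, (x k : ℕ) = N},
        (∀ k, (q.1 k : ℕ) ≤ p.1 k + Fintype.card K ∧ (p.1 k : ℕ) ≤ q.1 k + Fintype.card K) ∧
        (c q = i ∨ (q.1 i : ℕ) ≤ Fintype.card K) := by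
  classical
  let T := {x : K → Fin (N + 1) // ∑ k, (x k : ℕ) = N}
  have mk : ∀ y : K → ℕ, ∑ k, y k = N → ∃ x : T, ∀ k, (x.1 k : ℕ) = y k := by
    intro y hy
    have hlt : ∀ k, y k < N + 1 := fun k => by
      have := Finset.single_le_sum (f := y) (fun _ _ => Nat.zero_le _) (Finset.mem_univ k)
      omega
    exact ⟨⟨fun k => ⟨y k, hlt k⟩, hy⟩, fun k => rfl⟩
  have : Nonempty T := by
    obtain ⟨k⟩ := ‹Nonempty K›
    obtain ⟨x, _⟩ := mk (fun j => if j = k then N else 0) (by simp)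
    exact ⟨x⟩
  obtain ⟨C, σ, hC, hdom⟩ := scarf' (fun i (x : T) => (x.1 i : ℕ)) c
  obtain ⟨i₁, hi₁, -⟩ := hdom (Classical.arbitrary T)
  obtain ⟨p, hp, -⟩ := hC i₁ hi₁
  have hm : ∀ k, ∃ x ∈ σ, ∀ x' ∈ σ, (x.1 k : ℕ) ≤ x'.1 k := fun k =>
    Finset.exists_min_image σ (fun x => (x.1 k : ℕ)) ⟨p, hp⟩
  choose m hmσ hmin using hm
  let μ : K → ℕ := fun k => if k ∈ C then (m k).1 k else 0
  have hμ : ∀ x ∈ σ, ∀ k, μ k ≤ x.1 k := by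
    intro x hx k
    simp only [μ]
    split_ifs
    · exact hmin k x hx
    · exact Nat.zero_le _
  have hsum : N < ∑ k, μ k + Fintype.card K := by
    by_contra hle
    push Not at hle
    let ν : K → ℕ := fun k => if k ∈ C then μ k + 1 else 0
    have hν : ∑ k, ν k ≤ N := by
      refine le_trans ?_ hle
      have : ∑ k, ν k ≤ ∑ k, (μ k + 1) := Finset.sum_le_sum fun k _ => by
        simp only [ν]; split_ifs <;> omega
      simpa [Finset.sum_add_distrib] using this
    obtain ⟨y, hy⟩ := mk (fun k => ν k + if k = i₁ then N - ∑ k, ν k else 0) (by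
      rw [Finset.sum_add_distrib]; simp; omega)
    obtain ⟨i, hi, hyi⟩ := hdom y
    have h1 := hyi _ (hmσ i)
    have h2 := hy i
    have h3 : ν i = μ i + 1 := by simp [ν, hi]
    have h4 : μ i = (m i).1 i := by simp [μ, hi]
    omega
  have hclose : ∀ x ∈ σ, ∀ k, (x.1 k : ℕ) ≤ μ k + Fintype.card K := by
    intro x hx k
    have h1 : ∑ j ∈ Finset.univ.erase k, μ j ≤ ∑ j ∈ Finset.univ.erase k, (x.1 j : ℕ) :=
      Finset.sum_le_sum fun j _ => hμ x hx j
    have h2 := Finset.add_sum_erase Finset.univ (fun j => (x.1 j : ℕ)) (Finset.mem_univ k)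
    have h3 := Finset.add_sum_erase Finset.univ μ (Finset.mem_univ k)
    have h4 := x.2
    omega
  refine ⟨p, fun i => ?_⟩
  by_cases hi : i ∈ C
  · obtain ⟨q, hq, hqi⟩ := hC i hi
    refine ⟨q, fun k => ?_, Or.inl hqi⟩
    have a1 := hclose q hq k
    have a2 := hclose p hp k
    have a3 := hμ q hq k
    have a4 := hμ p hp k
    omega
  · refine ⟨p, fun k => by omega, Or.inr ?_⟩
    have a2 := hclose p hp i
    simpa [μ, hi] using a2

theorem approx {K : Type} [Fintype K] [DecidableEq K] [Nonempty K] (G : (K → ℝ) → K → ℝ)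
    (hG : ∀ p ∈ stdSimplex ℝ K, G p ∈ stdSimplex ℝ K) (N : ℕ) (hN : 0 < N) :
    ∃ p ∈ stdSimplex ℝ K, ∀ i, ∃ q ∈ stdSimplex ℝ K,
      (∀ k, |q k - p k| ≤ Fintype.card K / (N : ℝ)) ∧
      q i - Fintype.card K / (N : ℝ) ≤ G q i := by
  classical
  have hN' : (0 : ℝ) < N := by exact_mod_cast hN
  let T := {x : K → Fin (N + 1) // ∑ k, (x k : ℕ) = N}
  let φ : T → K → ℝ := fun x k => ((x.1 k : ℕ) : ℝ) / N
  have hφ : ∀ x, φ x ∈ stdSimplex ℝ K := by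
    intro x
    refine ⟨fun k => by positivity, ?_⟩
    simp only [φ]
    rw [← Finset.sum_div, ← Nat.cast_sum, x.2, div_self hN'.ne']
  have hlab : ∀ x : T, ∃ i, φ x i ≤ G (φ x) i := by
    intro x
    by_contra h
    push Not at h
    have := Finset.sum_lt_sum_of_nonempty (s := Finset.univ) Finset.univ_nonempty fun i _ => h i
    rw [(hφ x).2, (hG _ (hφ x)).2] at this
    exact lt_irrefl _ this
  choose c hc using hlab
  obtain ⟨p, hp⟩ := grid N c
  refine ⟨φ p, hφ p, fun i => ?_⟩
  obtain ⟨q, hq, hqi⟩ := hp i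
  refine ⟨φ q, hφ q, fun k => ?_, ?_⟩
  · obtain ⟨b1, b2⟩ := hq k
    have b1 : ((q.1 k : ℕ) : ℝ) ≤ (p.1 k : ℕ) + Fintype.card K := by exact_mod_cast b1
    have b2 : ((p.1 k : ℕ) : ℝ) ≤ (q.1 k : ℕ) + Fintype.card K := by exact_mod_cast b2
    simp only [φ]
    rw [← sub_div, abs_div, abs_of_pos hN']
    gcongr
    rw [abs_le]
    constructor <;> linarith
  · rcases hqi with h | h
    · have h2 := hc q
      rw [h] at h2
      have : (0 : ℝ) ≤ Fintype.card K / (N : ℝ) := by positivity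
      linarith
    · have h1 : φ q i ≤ Fintype.card K / (N : ℝ) := by
        simp only [φ]
        gcongr
      have := (hG _ (hφ q)).1 i
      linarith

theorem brouwer {K : Type} [Fintype K] [DecidableEq K] [Nonempty K] (G : (K → ℝ) → K → ℝ)
    (hG : ∀ p ∈ stdSimplex ℝ K, G p ∈ stdSimplex ℝ K) (hcont : ContinuousOn G (stdSimplex ℝ K)) :
    ∃ p ∈ stdSimplex ℝ K, G p = p := by
  classical
  have h := fun N : ℕ => approx G hG (N + 1) (Nat.succ_pos N)
  choose p hp q hq hqp hqG using h
  obtain ⟨x, hx, φ, hφ, hlim⟩ := (isCompact_stdSimplex ℝ K).tendsto_subseq hp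
  have hε : Filter.Tendsto (fun N : ℕ => (Fintype.card K : ℝ) / ((N + 1 : ℕ) : ℝ)) Filter.atTop
      (nhds 0) :=
    (tendsto_const_div_atTop_nhds_zero_nat (Fintype.card K : ℝ)).comp
      (Filter.tendsto_add_atTop_nat 1)
  have hεφ := hε.comp hφ.tendsto_atTop
  have hle : ∀ i, x i ≤ G x i := by
    intro i
    have hql : Filter.Tendsto (fun n => q (φ n) i) Filter.atTop (nhds x) := by
      rw [tendsto_pi_nhds] at hlim ⊢
      intro k
      have hd : Filter.Tendsto (fun n => q (φ n) i k - p (φ n) k) Filter.atTop (nhds 0) :=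
        squeeze_zero_norm (fun n => hqp (φ n) i k) hεφ
      simpa using hd.add (hlim k)
    have hGl : Filter.Tendsto (fun n => G (q (φ n) i)) Filter.atTop (nhds (G x)) := by
      have := (hcont x hx).tendsto
      apply this.comp
      rw [tendsto_nhdsWithin_iff]
      exact ⟨hql, Filter.Eventually.of_forall fun n => hq (φ n) i⟩
    have h1 := ((tendsto_pi_nhds.1 hql) i).sub hεφ
    rw [sub_zero] at h1
    exact le_of_tendsto_of_tendsto' h1 ((tendsto_pi_nhds.1 hGl) i) fun n => hqG (φ n) i
  refine ⟨x, hx, ?_⟩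
  have hs : ∑ i, x i = ∑ i, G x i := by rw [hx.2, (hG x hx).2]
  have := (Finset.sum_eq_sum_iff_of_le fun i _ => hle i).1 hs
  funext i
  exact (this i (Finset.mem_univ i)).symm

theorem kkm {K : Type} [Fintype K] [DecidableEq K] [Nonempty K] (F : (K → ℝ) → K → ℝ)
    (hF : ∀ k, Continuous fun p => F p k)
    (h0 : ∀ p ∈ stdSimplex ℝ K, ∑ k, p k * F p k = 0) :
    ∃ p ∈ stdSimplex ℝ K, ∀ k, F p k ≤ 0 := by
  let Z : (K → ℝ) → ℝ := fun p => ∑ k, max (F p k) 0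
  have hZ0 : ∀ p, 0 ≤ Z p := fun p => Finset.sum_nonneg fun k _ => le_max_right _ _
  have hZc : Continuous Z := continuous_finsetSum _ fun k _ => (hF k).max continuous_const
  let G : (K → ℝ) → K → ℝ := fun p k => (p k + max (F p k) 0) / (1 + Z p)
  have hpos : ∀ p, 0 < 1 + Z p := fun p => by linarith [hZ0 p]
  obtain ⟨p, hp, hfix⟩ := brouwer G (by
    intro p hp
    refine ⟨fun k => div_nonneg (add_nonneg (hp.1 k) (le_max_right _ _)) (hpos p).le, ?_⟩
    simp only [G]
    rw [← Finset.sum_div, Finset.sum_add_distrib, hp.2]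
    exact div_self (hpos p).ne') (by
    apply Continuous.continuousOn
    refine continuous_pi fun k => ?_
    exact ((continuous_apply k).add ((hF k).max continuous_const)).div (continuous_const.add hZc)
      fun p => (hpos p).ne')
  refine ⟨p, hp, ?_⟩
  have hk : ∀ k, max (F p k) 0 = p k * Z p := by
    intro k
    have := congrFun hfix k
    simp only [G] at this
    rw [div_eq_iff (hpos p).ne'] at this
    linarith
  have hZ : Z p = 0 := by
    by_contra hne
    have hZp : 0 < Z p := lt_of_le_of_ne (hZ0 p) (Ne.symm hne)
    have hnn : ∀ k, p k * F p k = p k * (p k * Z p) := by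
      intro k
      rcases (hp.1 k).eq_or_lt with h | h
      · rw [← h]; simp
      · rw [← hk k, max_eq_left]
        by_contra hlt
        push Not at hlt
        have := hk k
        rw [max_eq_right hlt.le] at this
        exact absurd this (mul_pos h hZp).ne
    have hs := h0 p hp
    rw [Finset.sum_congr rfl fun k _ => hnn k] at hs
    have hz := (Finset.sum_eq_zero_iff_of_nonneg fun k _ =>
      mul_nonneg (hp.1 k) (mul_nonneg (hp.1 k) hZp.le)).1 hs
    have : ∑ k, p k = 0 := Finset.sum_eq_zero fun k hkk => by
      have := hz k hkk
      rcases mul_eq_zero.1 this with h | h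
      · exact h
      · exact (mul_eq_zero.1 h).resolve_right hne
    rw [hp.2] at this
    exact one_ne_zero this
  intro k
  have := hk k
  rw [hZ, mul_zero] at this
  exact (le_max_left _ _).trans this.le

end NashAux

namespace NashAux

section game

variable {I : Type} [Fintype I] [DecidableEq I] {S : I → Type} [∀ i, Fintype (S i)]

theorem prod_update (σ : ∀ i, S i → ℝ) (i : I) (τ : S i → ℝ) (s : ∀ j, S j) :
    ∏ j, Function.update σ i τ j (s j) = τ (s i) * ∏ j ∈ Finset.univ.erase i, σ j (s j) := by
  rw [← Finset.mul_prod_erase Finset.univ _ (Finset.mem_univ i), Function.update_self]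
  congr 1
  refine Finset.prod_congr rfl fun j hj => ?_
  rw [Function.update_of_ne (Finset.ne_of_mem_erase hj)]

open Classical in
/-- Payoff when player `i` plays the pure strategy `a`. -/
noncomputable def V (u : I → (∀ j, S j) → ℝ) (σ : ∀ i, S i → ℝ) (i : I) (a : S i) : ℝ :=
  ∑ s : ∀ j, S j, (if s i = a then 1 else 0) * (∏ j ∈ Finset.univ.erase i, σ j (s j)) * u i s

theorem payoff_update (u : I → (∀ j, S j) → ℝ) (σ : ∀ i, S i → ℝ) (i : I) (τ : S i → ℝ) :
    ∑ s : ∀ j, S j, (∏ j, Function.update σ i τ j (s j)) * u i s = ∑ a, τ a * V u σ i a := by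
  classical
  simp only [V, Finset.mul_sum]
  rw [Finset.sum_comm]
  refine Finset.sum_congr rfl fun s _ => ?_
  rw [prod_update, Finset.sum_eq_single (s i)]
  · rw [if_pos rfl]; ring
  · intro b _ hb
    rw [if_neg hb.symm]; ring
  · intro h; exact absurd (Finset.mem_univ _) h

theorem payoff_self (u : I → (∀ j, S j) → ℝ) (σ : ∀ i, S i → ℝ) (i : I) :
    ∑ s : ∀ j, S j, (∏ j, σ j (s j)) * u i s = ∑ a, σ i a * V u σ i a := by
  rw [← payoff_update, Function.update_eq_self]

end game

end NashAux

open NashAux in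
/-- Every finite game has a Nash equilibrium in mixed strategies. -/
theorem stmt_0 (I : Type) [Fintype I] [Nonempty I] [DecidableEq I]
    (S : I → Type) [∀ i, Fintype (S i)] [∀ i, Nonempty (S i)]
    (u : I → (∀ j, S j) → ℝ) :
    ∃ σ : ∀ i, S i → ℝ,
      (∀ i, (∀ a, 0 ≤ σ i a) ∧ ∑ a, σ i a = 1) ∧
      (∀ i (τ : S i → ℝ), (∀ a, 0 ≤ τ a) → ∑ a, τ a = 1 →
        ∑ s : ∀ j, S j, (∏ j, Function.update σ i τ j (s j)) * u i s ≤
          ∑ s : ∀ j, S j, (∏ j, σ j (s j)) * u i s) := by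
  classical
  let m : ((∀ j, S j) → ℝ) → ∀ i, S i → ℝ := fun p i a => ∑ s, p s * if s i = a then 1 else 0
  have hmc : ∀ i a, Continuous fun p => m p i a := by
    intro i a
    simp only [m]
    fun_prop
  have hm : ∀ p i (f : S i → ℝ), ∑ a, m p i a * f a = ∑ s, p s * f (s i) := by
    intro p i f
    simp only [m, Finset.sum_mul]
    rw [Finset.sum_comm]
    refine Finset.sum_congr rfl fun s _ => ?_
    rw [Finset.sum_eq_single (s i)]
    · rw [if_pos rfl]; ring
    · intro b _ hb
      rw [if_neg hb.symm]; ring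
    · intro h; exact absurd (Finset.mem_univ _) h
  have hmΔ : ∀ p ∈ stdSimplex ℝ (∀ j, S j), ∀ i, (∀ a, 0 ≤ m p i a) ∧ ∑ a, m p i a = 1 := by
    intro p hp i
    refine ⟨fun a => Finset.sum_nonneg fun s _ => mul_nonneg (hp.1 s) (by split_ifs <;> simp), ?_⟩
    have := hm p i (fun _ => 1)
    simpa [hp.2] using this
  let E : I → (∀ i, S i → ℝ) → ℝ := fun i σ => ∑ a, σ i a * V u σ i a
  have hVc : ∀ i a, Continuous fun p => V u (m p) i a := by
    intro i a
    simp only [V]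
    refine continuous_finsetSum _ fun s _ => ?_
    refine (continuous_const.mul ?_).mul continuous_const
    exact continuous_finsetProd _ fun j _ => hmc j (s j)
  have hEc : ∀ i, Continuous fun p => E i (m p) := fun i =>
    continuous_finsetSum _ fun a _ => (hmc i a).mul (hVc i a)
  obtain ⟨p, hp, hle⟩ := kkm (fun p (s : ∀ j, S j) => ∑ i, (V u (m p) i (s i) - E i (m p)))
    (fun s => continuous_finsetSum _ fun i _ => (hVc i (s i)).sub (hEc i)) (by
      intro p hp
      simp only [Finset.mul_sum]
      rw [Finset.sum_comm]
      refine Finset.sum_eq_zero fun i _ => ?_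
      simp only [mul_sub]
      rw [Finset.sum_sub_distrib, ← hm p i (fun a => V u (m p) i a), ← Finset.sum_mul, hp.2]
      simp [E])
  refine ⟨m p, hmΔ p hp, ?_⟩
  have hbest : ∀ j, ∃ a, E j (m p) ≤ V u (m p) j a := by
    intro j
    obtain ⟨a, -, ha⟩ := Finset.exists_max_image Finset.univ (V u (m p) j) Finset.univ_nonempty
    refine ⟨a, ?_⟩
    calc E j (m p) ≤ ∑ b, m p j b * V u (m p) j a := Finset.sum_le_sum fun b hb =>
          mul_le_mul_of_nonneg_left (ha b hb) ((hmΔ p hp j).1 b)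
      _ = V u (m p) j a := by rw [← Finset.sum_mul, (hmΔ p hp j).2, one_mul]
  choose b hb using hbest
  have hV : ∀ i a, V u (m p) i a ≤ E i (m p) := by
    intro i a
    have h := hle (Function.update b i a)
    rw [← Finset.add_sum_erase Finset.univ _ (Finset.mem_univ i), Function.update_self] at h
    have h2 : 0 ≤ ∑ j ∈ Finset.univ.erase i,
        (V u (m p) j (Function.update b i a j) - E j (m p)) := by
      refine Finset.sum_nonneg fun j hj => ?_
      rw [Function.update_of_ne (Finset.ne_of_mem_erase hj)]
      exact sub_nonneg.2 (hb j)
    linarith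
  intro i τ hτ hτ1
  rw [payoff_update, payoff_self]
  calc ∑ a, τ a * V u (m p) i a ≤ ∑ a, τ a * E i (m p) := Finset.sum_le_sum fun a _ =>
        mul_le_mul_of_nonneg_left (hV i a) (hτ a)
    _ = E i (m p) := by rw [← Finset.sum_mul, hτ1, one_mul]
end

section
/- Every finite game whose payoffs are mediated by a deterministic mechanism has a Nash equilibrium in mixed strategies: if I is a nonempty finite set of players, each player i has a nonempty finite strategy set S i, R : (Π j, S j) → (Π j, S j) is any function (the coalition structure formation mechanism), and each player i has a payoff function v i : (Π j, S j) → ℝ, then the game with payoff functions u i = v i ∘ R has a mixed strategy Nash equilibrium. -/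
namespace ScarfNash

def Dom {I X : Type*} (r : I → X → ℕ) (B : Finset X) : Prop :=
  ∀ y, ∃ i, ∀ x ∈ B, r i y ≤ r i x

def Mk {I X : Type*} (r : I → X → ℕ) (B : Finset X) (k : I) (y : X) : Prop :=
  ∀ l, l ≠ k → ∃ b ∈ B, r l b < r l y

lemma ext_unique {I X : Type*} [DecidableEq X]
    (r : I → X → ℕ) (hr : ∀ i, Function.Injective (r i)) (B : Finset X) (k : I)
    {x y : X} (hx : Mk r B k x) (hy : Mk r B k y)
    (dx : Dom r (insert x B)) (dy : Dom r (insert y B)) : x = y := by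
  have key : ∀ {x y : X}, Mk r B k y → Dom r (insert x B) → r k y ≤ r k x := by
    intro x y hy dx
    obtain ⟨i, hi⟩ := dx y
    by_cases h : i = k
    · subst h; exact hi x (by simp)
    · obtain ⟨b, hb, hlt⟩ := hy i h
      have := hi b (by simp [hb])
      omega
  exact hr k (le_antisymm (key hx dy) (key hy dx))

lemma ext_exists {I X : Type*} [Fintype X] [DecidableEq X]
    (r : I → X → ℕ) (B : Finset X) (k : I) (hB : Dom r B)
    (hne : ∃ y, Mk r B k y) : ∃ x, Mk r B k x ∧ Dom r (insert x B) := by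
  classical
  obtain ⟨y0, hy0⟩ := hne
  obtain ⟨x, hx, hmax⟩ := Finset.exists_max_image (Finset.univ.filter (Mk r B k)) (r k)
    ⟨y0, by simp [hy0]⟩
  simp only [Finset.mem_filter, Finset.mem_univ, true_and] at hx hmax
  refine ⟨x, hx, fun y => ?_⟩
  by_cases hy : Mk r B k y
  · obtain ⟨l, hl⟩ := hB y
    have hlk : l = k := by
      by_contra h
      obtain ⟨b, hb, hlt⟩ := hy l h
      have := hl b hb
      omega
    subst hlk
    refine ⟨l, fun z hz => ?_⟩
    rcases Finset.mem_insert.1 hz with rfl | hz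
    · exact hmax y hy
    · exact hl z hz
  · unfold Mk at hy
    push Not at hy
    obtain ⟨l, hl, h⟩ := hy
    refine ⟨l, fun z hz => ?_⟩
    rcases Finset.mem_insert.1 hz with rfl | hz
    · obtain ⟨b, hb, hlt⟩ := hx l hl
      exact (h b hb).trans hlt.le
    · exact h z hz

lemma door_two {I X : Type*} [Fintype I] [Fintype X] [DecidableEq X]
    (r : I → X → ℕ) (hr : ∀ i, Function.Injective (r i)) (B : Finset X)
    (hB : Dom r B) (hcard : B.card + 1 = Fintype.card I) (hne : B.Nonempty)
    (hM : ∀ k, ∃ y, Mk r B k y) :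
    ∃ x y, x ≠ y ∧ ∀ z, (z ∉ B ∧ Dom r (insert z B)) ↔ (z = x ∨ z = y) := by
  classical
  have hmin : ∀ A : Finset X, A.Nonempty → ∃ f : I → X, ∀ i, f i ∈ A ∧ ∀ b ∈ A, r i (f i) ≤ r i b := by
    intro A hA
    have : ∀ i, ∃ m ∈ A, ∀ b ∈ A, r i m ≤ r i b := fun i => Finset.exists_min_image A (r i) hA
    choose f hf using this
    exact ⟨f, hf⟩
  obtain ⟨f, hf⟩ := hmin B hne
  obtain ⟨i, -, j, -, hij, hfij⟩ := Finset.exists_ne_map_eq_of_card_lt_of_maps_to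
    (s := (Finset.univ : Finset I)) (t := B) (f := f)
    (by rw [Finset.card_univ]; omega) (fun a _ => (hf a).1)
  -- B misses M_k
  have hmiss : ∀ k, (k = i ∨ k = j) → ∀ b ∈ B, ¬ Mk r B k b := by
    intro k hk b hb hbM
    obtain ⟨l, hl⟩ := hB b
    have hlk : l = k := by
      by_contra h
      obtain ⟨b', hb', hlt⟩ := hbM l h
      have := hl b' hb'
      omega
    subst hlk
    have hbf : f l = b := hr l (le_antisymm ((hf l).2 b hb) (hl _ (hf l).1))
    have : ∃ l', l' ≠ l ∧ f l' = b := by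
      rcases hk with rfl | rfl
      · exact ⟨j, hij.symm, by rw [← hfij, hbf]⟩
      · exact ⟨i, hij, by rw [hfij, hbf]⟩
    obtain ⟨l', hne', h'⟩ := this
    obtain ⟨b', hb', hlt⟩ := hbM l' hne'
    have := (hf l').2 b' hb'
    rw [h'] at this
    omega
  -- every extension lies in M_i or M_j
  have hin : ∀ x, x ∉ B → Dom r (insert x B) → Mk r B i x ∨ Mk r B j x := by
    intro x hx hD
    obtain ⟨g, hg⟩ := hmin (insert x B) ⟨x, by simp⟩
    have hcard' : (insert x B).card = Fintype.card I := by
      rw [Finset.card_insert_of_notMem hx]; exact hcard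
    have himg : Finset.univ.image g = insert x B := by
      apply Finset.Subset.antisymm
      · intro z hz
        obtain ⟨l, -, rfl⟩ := Finset.mem_image.1 hz
        exact (hg l).1
      · intro z hz
        obtain ⟨l, hl⟩ := hD z
        exact Finset.mem_image.2 ⟨l, by simp, hr l (le_antisymm ((hg l).2 z hz) (hl _ (hg l).1))⟩
    have ginj : Function.Injective g := by
      have := (Finset.card_image_iff (s := Finset.univ) (f := g)).1 (by rw [himg, hcard', Finset.card_univ])
      intro a b hab
      exact this (by simp) (by simp) hab
    have hxg : x ∈ Finset.univ.image g := by rw [himg]; simp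
    obtain ⟨k, -, hk⟩ := Finset.mem_image.1 hxg
    have hgB : ∀ l, l ≠ k → g l ∈ B := by
      intro l hl
      rcases Finset.mem_insert.1 (hg l).1 with h | h
      · exact absurd (ginj (h.trans hk.symm)) hl
      · exact h
    have hMx : Mk r B k x := by
      intro l hl
      refine ⟨g l, hgB l hl, lt_of_le_of_ne ((hg l).2 x (by simp)) fun h => ?_⟩
      have := hr l h
      exact hx (this ▸ hgB l hl)
    have hgf : ∀ l, l ≠ k → g l = f l := fun l hl =>
      hr l (le_antisymm ((hg l).2 _ (by simp [(hf l).1])) ((hf l).2 _ (hgB l hl)))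
    by_cases h1 : k = i
    · left; rwa [← h1]
    by_cases h2 : k = j
    · right; rwa [← h2]
    exact absurd (ginj ((hgf i (Ne.symm h1)).trans (hfij.trans (hgf j (Ne.symm h2)).symm))) hij
  obtain ⟨x, hxM, hxD⟩ := ext_exists r B i hB (hM i)
  obtain ⟨y, hyM, hyD⟩ := ext_exists r B j hB (hM j)
  have hxB : x ∉ B := fun h => hmiss i (Or.inl rfl) x h hxM
  have hyB : y ∉ B := fun h => hmiss j (Or.inr rfl) y h hyM
  refine ⟨x, y, ?_, ?_⟩
  · rintro rfl
    obtain ⟨l, hl⟩ := hxD x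
    have : ∃ b ∈ B, r l b < r l x := by
      by_cases h : l = i
      · exact hyM l (h ▸ hij)
      · exact hxM l h
    obtain ⟨b, hb, hlt⟩ := this
    have := hl b (by simp [hb])
    omega
  · intro z
    constructor
    · rintro ⟨hz, hD⟩
      rcases hin z hz hD with h | h
      · left; exact ext_unique r hr B i h hxM hD hxD
      · right; exact ext_unique r hr B j h hyM hD hyD
    · rintro (rfl | rfl)
      · exact ⟨hxB, hxD⟩
      · exact ⟨hyB, hyD⟩

lemma room_even {I X : Type*} [Fintype I] [DecidableEq I] [DecidableEq X]
    (c : X → I) (i0 : I) (A : Finset X) (hA : A.card = Fintype.card I)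
    (hc : A.image c ≠ Finset.univ) :
    Even (A.filter (fun x => (A.erase x).image c = Finset.univ.erase i0)).card := by
  by_cases h : ∃ x ∈ A, (A.erase x).image c = Finset.univ.erase i0
  swap
  · rw [Finset.filter_eq_empty_iff.2]
    · simp
    · intro x hx h'; exact h ⟨x, hx, h'⟩
  obtain ⟨x, hx, hxi⟩ := h
  have hinj : Set.InjOn c (A.erase x : Finset X) := by
    apply Finset.card_image_iff.1
    rw [hxi, Finset.card_erase_of_mem hx, Finset.card_erase_of_mem (by simp), hA, Finset.card_univ]
  have hcx : c x ≠ i0 := by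
    intro h
    apply hc
    rw [← Finset.insert_erase hx, Finset.image_insert, hxi, h, Finset.insert_erase (by simp)]
  have : c x ∈ (A.erase x).image c := by rw [hxi]; simp [hcx]
  obtain ⟨x', hx', hcx'⟩ := Finset.mem_image.1 this
  have hne : x' ≠ x := (Finset.mem_erase.1 hx').1
  have hx'A : x' ∈ A := (Finset.mem_erase.1 hx').2
  have hset : A.filter (fun x => (A.erase x).image c = Finset.univ.erase i0) = {x, x'} := by
    ext y
    simp only [Finset.mem_filter, Finset.mem_insert, Finset.mem_singleton]
    constructor
    · rintro ⟨hy, hyi⟩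
      by_contra hcon
      push Not at hcon
      obtain ⟨hyx, hyx'⟩ := hcon
      have hyE : y ∈ A.erase x := Finset.mem_erase.2 ⟨hyx, hy⟩
      have h1 : c y ∈ (A.erase y).image c := by
        rw [hyi, ← hxi]; exact Finset.mem_image_of_mem c hyE
      obtain ⟨z, hz, hcz⟩ := Finset.mem_image.1 h1
      obtain ⟨hzy, hzA⟩ := Finset.mem_erase.1 hz
      by_cases hzx : z = x
      · subst hzx
        exact hyx' (hinj hyE hx' (by rw [hcx', hcz]))
      · exact hzy (hinj (Finset.mem_erase.2 ⟨hzx, hzA⟩) hyE hcz)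
    · rintro (rfl | rfl)
      · exact ⟨hx, hxi⟩
      · refine ⟨hx'A, ?_⟩
        rw [← hxi]
        ext i
        simp only [Finset.mem_image, Finset.mem_erase]
        constructor
        · rintro ⟨z, ⟨hz1, hz2⟩, rfl⟩
          by_cases hzx : z = x
          · exact ⟨y, ⟨hne, hx'A⟩, by rw [hcx', hzx]⟩
          · exact ⟨z, ⟨hzx, hz2⟩, rfl⟩
        · rintro ⟨z, ⟨hz1, hz2⟩, rfl⟩
          by_cases hzx : z = y
          · exact ⟨x, ⟨hne.symm, hx⟩, by rw [hzx, hcx']⟩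
          · exact ⟨z, ⟨hzx, hz2⟩, rfl⟩
  rw [hset, Finset.card_pair hne.symm]
  exact even_two

lemma scarf {I T : Type*} [Fintype I] [DecidableEq I] [Nonempty I] [Fintype T] [DecidableEq T]
    [Nonempty T] (r : I → T ⊕ I → ℕ) (hr : ∀ i, Function.Injective (r i))
    (h1 : ∀ i x, x ≠ Sum.inr i → r i (Sum.inr i) < r i x)
    (h2 : ∀ i k t, k ≠ i → r i (Sum.inl t) < r i (Sum.inr k))
    (c : T → I) :
    ∃ A : Finset (T ⊕ I), Dom r A ∧ A.image (Sum.elim c id) = Finset.univ := by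
  classical
  by_contra hcon
  push Not at hcon
  obtain ⟨i0⟩ := ‹Nonempty I›
  set C : T ⊕ I → I := Sum.elim c id with hC
  set B0 : Finset (T ⊕ I) := (Finset.univ.erase i0).image Sum.inr with hB0
  have hmemB0 : ∀ l, l ≠ i0 → Sum.inr l ∈ B0 := fun l hl =>
    Finset.mem_image.2 ⟨l, by simp [hl], rfl⟩
  let doors : Finset (Finset (T ⊕ I)) := Finset.univ.filter fun B =>
    Dom r B ∧ B.card + 1 = Fintype.card I ∧ B.image C = Finset.univ.erase i0
  let rooms : Finset (Finset (T ⊕ I)) := Finset.univ.filter fun A =>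
    Dom r A ∧ A.card = Fintype.card I
  let dE : Finset (T ⊕ I) → Finset (T ⊕ I) := fun B =>
    Finset.univ.filter fun x => x ∉ B ∧ Dom r (insert x B)
  let rE : Finset (T ⊕ I) → Finset (T ⊕ I) := fun A =>
    A.filter fun x => (A.erase x).image C = Finset.univ.erase i0
  have hcount : ∑ B ∈ doors, (dE B).card = ∑ A ∈ rooms, (rE A).card := by
    rw [← Finset.card_sigma, ← Finset.card_sigma]
    refine Finset.card_bij' (fun p _ => ⟨insert p.2 p.1, p.2⟩) (fun p _ => ⟨p.1.erase p.2, p.2⟩)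
      ?_ ?_ ?_ ?_
    · rintro ⟨B, x⟩ h
      simp only [Finset.mem_sigma, doors, dE, Finset.mem_filter, Finset.mem_univ, true_and] at h
      obtain ⟨⟨hd, hcd, him⟩, hx, hD⟩ := h
      simp only [Finset.mem_sigma, rooms, rE, Finset.mem_filter, Finset.mem_univ, true_and]
      refine ⟨⟨hD, by rw [Finset.card_insert_of_notMem hx, hcd]⟩, by simp, ?_⟩
      rw [Finset.erase_insert hx, him]
    · rintro ⟨A, x⟩ h
      simp only [Finset.mem_sigma, rooms, rE, Finset.mem_filter, Finset.mem_univ, true_and] at h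
      obtain ⟨⟨hd, hcd⟩, hx, him⟩ := h
      simp only [Finset.mem_sigma, doors, dE, Finset.mem_filter, Finset.mem_univ, true_and]
      refine ⟨⟨?_, ?_, him⟩, by simp, ?_⟩
      · intro y
        obtain ⟨i, hi⟩ := hd y
        exact ⟨i, fun z hz => hi z (Finset.mem_of_mem_erase hz)⟩
      · rw [Finset.card_erase_add_one hx, hcd]
      · rwa [Finset.insert_erase hx]
    · rintro ⟨B, x⟩ h
      simp only [Finset.mem_sigma, doors, dE, Finset.mem_filter, Finset.mem_univ, true_and] at h
      simp [Finset.erase_insert h.2.1]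
    · rintro ⟨A, x⟩ h
      simp only [Finset.mem_sigma, rooms, rE, Finset.mem_filter, Finset.mem_univ, true_and] at h
      simp [Finset.insert_erase h.2.1]
  have hR : Even (∑ A ∈ rooms, (rE A).card) := by
    apply Finset.even_sum
    intro A hA
    simp only [rooms, Finset.mem_filter, Finset.mem_univ, true_and] at hA
    exact room_even C i0 A hA.2 (hcon A hA.1)
  have hB0D : Dom r B0 := by
    intro y
    rcases y with t | k
    · refine ⟨i0, fun x hx => ?_⟩
      obtain ⟨l, hl, rfl⟩ := Finset.mem_image.1 hx
      exact (h2 i0 l t (by simpa using hl)).le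
    · refine ⟨k, fun x hx => ?_⟩
      by_cases h : x = Sum.inr k
      · rw [h]
      · exact (h1 k x h).le
  have hB0d : B0 ∈ doors := by
    simp only [doors, Finset.mem_filter, Finset.mem_univ, true_and]
    refine ⟨hB0D, ?_, ?_⟩
    · rw [hB0, Finset.card_image_of_injective _ Sum.inr_injective, Finset.card_erase_add_one (by simp),
        Finset.card_univ]
    · rw [hB0, Finset.image_image]
      have : C ∘ Sum.inr = id := by ext; simp [hC]
      rw [this, Finset.image_id]
  have hB0one : (dE B0).card = 1 := by
    have hmk : ∀ x, x ∉ B0 → Mk r B0 i0 x := by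
      intro x hx l hl
      refine ⟨Sum.inr l, hmemB0 l hl, h1 l x ?_⟩
      rintro rfl
      exact hx (hmemB0 l hl)
    have hnot : ∀ x, x ∈ B0 → ¬ Mk r B0 i0 x := by
      intro x hx hM
      obtain ⟨l, hl, rfl⟩ := Finset.mem_image.1 hx
      obtain ⟨b, hb, hlt⟩ := hM l (by simpa using hl)
      by_cases h : b = Sum.inr l
      · rw [h] at hlt; omega
      · have := h1 l b h; omega
    obtain ⟨t⟩ := ‹Nonempty T›
    obtain ⟨x, hxM, hxD⟩ := ext_exists r B0 i0 hB0D ⟨Sum.inl t, hmk _ (by simp [hB0])⟩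
    rw [Finset.card_eq_one]
    refine ⟨x, ?_⟩
    ext z
    simp only [dE, Finset.mem_filter, Finset.mem_univ, true_and, Finset.mem_singleton]
    constructor
    · rintro ⟨hz, hzD⟩
      exact ext_unique r hr B0 i0 (hmk z hz) hxM hzD hxD
    · rintro rfl
      exact ⟨fun h => hnot _ h hxM, hxD⟩
  have hother : ∀ B ∈ doors.erase B0, Even (dE B).card := by
    intro B hB
    obtain ⟨hne, hB⟩ := Finset.mem_erase.1 hB
    simp only [doors, Finset.mem_filter, Finset.mem_univ, true_and] at hB
    obtain ⟨hD, hcd, him⟩ := hB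
    have hT : ∃ t, Sum.inl t ∈ B := by
      by_contra hno
      push Not at hno
      apply hne
      ext x
      rcases x with t | k
      · simp [hno t, hB0]
      · have : k ∈ B.image C ↔ k ∈ Finset.univ.erase i0 := by rw [him]
        have h3 : k ∈ B.image C ↔ Sum.inr k ∈ B := by
          rw [Finset.mem_image]
          constructor
          · rintro ⟨z, hz, hzk⟩
            rcases z with t | k'
            · exact absurd hz (hno t)
            · have : k' = k := by simpa [hC] using hzk
              rwa [← this]
          · intro h; exact ⟨_, h, by simp [hC]⟩
        rw [← h3, this, hB0, Finset.mem_image]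
        simp
    obtain ⟨t, ht⟩ := hT
    obtain ⟨x, y, hxy, hall⟩ := door_two r hr B hD hcd ⟨_, ht⟩
      (fun k => ⟨Sum.inr k, fun l hl => ⟨_, ht, h2 l k t hl.symm⟩⟩)
    have : dE B = {x, y} := by
      ext z
      simp only [dE, Finset.mem_filter, Finset.mem_univ, true_and, Finset.mem_insert,
        Finset.mem_singleton]
      exact hall z
    rw [this, Finset.card_pair hxy]
    exact even_two
  rw [← hcount, ← Finset.add_sum_erase _ _ hB0d, hB0one] at hR
  have := Finset.even_sum _ hother
  rw [Nat.even_add] at hR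
  simp [this] at hR


abbrev Grid (I : Type*) [Fintype I] (K : ℕ) : Type _ :=
  {t : I → Fin (K + 1) // ∑ i, (t i : ℕ) = K}

lemma grid_of {I : Type*} [Fintype I] [DecidableEq I] (K : ℕ) (y : I → ℕ) (hy : ∑ i, y i = K) :
    ∃ t : Grid I K, ∀ i, (t.1 i : ℕ) = y i := by
  have hle : ∀ i, y i < K + 1 := fun i => by
    have := Finset.single_le_sum (f := y) (fun j _ => Nat.zero_le _) (Finset.mem_univ i)
    omega
  exact ⟨⟨fun i => ⟨y i, hle i⟩, by simpa using hy⟩, fun i => rfl⟩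

lemma grid_of_le {I : Type*} [Fintype I] [DecidableEq I] [Nonempty I] (K : ℕ) (w : I → ℕ)
    (hw : ∑ i, w i ≤ K) : ∃ t : Grid I K, ∀ i, w i ≤ (t.1 i : ℕ) := by
  obtain ⟨i0⟩ := ‹Nonempty I›
  obtain ⟨t, ht⟩ := grid_of K (fun i => w i + if i = i0 then K - ∑ i, w i else 0) (by
    rw [Finset.sum_add_distrib]; simp; omega)
  exact ⟨t, fun i => by rw [ht]; omega⟩

lemma grid_scarf {I : Type*} [Fintype I] [DecidableEq I] [Nonempty I] (K : ℕ)
    (c : Grid I K → I) :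
    ∃ x : Grid I K, ∀ i, (∃ t : Grid I K, c t = i ∧
      ∀ j, (t.1 j : ℕ) ≤ x.1 j + Fintype.card I ∧ (x.1 j : ℕ) ≤ t.1 j + Fintype.card I) ∨
      (x.1 i : ℕ) ≤ Fintype.card I := by
  classical
  obtain ⟨t0, -⟩ := grid_of_le (I := I) K (fun _ => 0) (by simp)
  have : Nonempty (Grid I K) := ⟨t0⟩
  let e := Fintype.equivFin (Grid I K ⊕ I)
  set N := Fintype.card (Grid I K ⊕ I) with hN
  let base : I → Grid I K ⊕ I → ℕ := fun i =>
    Sum.elim (fun t => (t.1 i : ℕ) + 1) (fun k => if k = i then 0 else K + 2)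
  let r : I → Grid I K ⊕ I → ℕ := fun i x => base i x * N + (e x : ℕ)
  have hlt : ∀ i x y, base i x < base i y → r i x < r i y := by
    intro i x y h
    have hx := (e x).2
    have : (base i x + 1) * N ≤ base i y * N := Nat.mul_le_mul_right _ h
    simp only [r]
    nlinarith
  have hr : ∀ i, Function.Injective (r i) := by
    intro i x y h
    have hb : base i x = base i y := by
      rcases lt_trichotomy (base i x) (base i y) with h' | h' | h'
      · have := hlt i x y h'; omega
      · exact h'
      · have := hlt i y x h'; omega
    simp only [r, hb] at h
    exact e.injective (Fin.ext (by omega))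
  have h1 : ∀ i x, x ≠ Sum.inr i → r i (Sum.inr i) < r i x := by
    intro i x hx
    apply hlt
    rcases x with t | k
    · simp [base]
    · have : k ≠ i := fun h => hx (by rw [h])
      simp [base, this]
  have h2 : ∀ i k t, k ≠ i → r i (Sum.inl t) < r i (Sum.inr k) := by
    intro i k t h
    apply hlt
    have := (t.1 i).2
    simp only [base, Sum.elim_inl, Sum.elim_inr, h, if_false]
    omega
  obtain ⟨A, hD, hA⟩ := scarf r hr h1 h2 c
  have hcol : ∀ i, (∃ t, Sum.inl t ∈ A ∧ c t = i) ∨ Sum.inr i ∈ A := by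
    intro i
    have : i ∈ A.image (Sum.elim c id) := by rw [hA]; simp
    obtain ⟨z, hz, hzi⟩ := Finset.mem_image.1 this
    rcases z with t | k
    · left; exact ⟨t, hz, by simpa using hzi⟩
    · right
      have : k = i := by simpa using hzi
      rwa [← this]
  have hDi : ∀ y : Grid I K, ∃ i, Sum.inr i ∉ A ∧ ∀ t, Sum.inl t ∈ A → (y.1 i : ℕ) ≤ t.1 i := by
    intro y
    obtain ⟨i, hi⟩ := hD (Sum.inl y)
    refine ⟨i, fun h => ?_, fun t ht => ?_⟩
    · have := hi _ h
      have := h1 i (Sum.inl y) (by simp)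
      omega
    · by_contra hcon
      have := hlt i (Sum.inl t) (Sum.inl y) (by simp only [base, Sum.elim_inl]; omega)
      have := hi _ ht
      omega
  have hne : ∃ x, Sum.inl x ∈ A := by
    obtain ⟨i, hi, -⟩ := hDi t0
    rcases hcol i with ⟨t, ht, -⟩ | h
    · exact ⟨t, ht⟩
    · exact absurd h hi
  obtain ⟨x, hx⟩ := hne
  have hmin : ∀ i, ∃ m : Grid I K, Sum.inl m ∈ A ∧ ∀ t, Sum.inl t ∈ A → (m.1 i : ℕ) ≤ t.1 i := by
    intro i
    obtain ⟨m, hm, hm'⟩ := Finset.exists_min_image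
      (Finset.univ.filter fun t : Grid I K => Sum.inl t ∈ A) (fun t => (t.1 i : ℕ)) ⟨x, by simp [hx]⟩
    exact ⟨m, by simpa using hm, fun t ht => hm' t (by simp [ht])⟩
  choose m hmA hm using hmin
  let w : I → ℕ := fun i => if Sum.inr i ∈ A then 0 else ((m i).1 i : ℕ) + 1
  have hw : K < ∑ i, w i := by
    by_contra hcon
    obtain ⟨y, hy⟩ := grid_of_le K w (by omega)
    obtain ⟨i, hi, hi'⟩ := hDi y
    have a := hy i
    have b := hi' _ (hmA i)
    simp only [w, hi, if_false] at a
    omega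
  have hwle : ∀ t, Sum.inl t ∈ A → ∀ i, w i ≤ (t.1 i : ℕ) + 1 := by
    intro t ht i
    simp only [w]
    split_ifs
    · omega
    · have := hm i t ht; omega
  have hwge : ∀ t, Sum.inl t ∈ A → ∀ i, (t.1 i : ℕ) + 1 ≤ w i + Fintype.card I := by
    intro t ht i
    have hs : ∑ j, ((t.1 j : ℕ) + 1 - w j) + ∑ j, w j = K + Fintype.card I := by
      rw [← Finset.sum_add_distrib, Finset.sum_congr rfl
        (fun j _ => Nat.sub_add_cancel (hwle t ht j)), Finset.sum_add_distrib, t.2]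
      simp
    have := Finset.single_le_sum (f := fun j => (t.1 j : ℕ) + 1 - w j)
      (fun j _ => Nat.zero_le _) (Finset.mem_univ i)
    omega
  refine ⟨x, fun i => ?_⟩
  rcases hcol i with ⟨t, ht, hti⟩ | h
  · left
    refine ⟨t, hti, fun j => ?_⟩
    have a1 := hwle t ht j
    have a2 := hwge t ht j
    have a3 := hwle x hx j
    have a4 := hwge x hx j
    omega
  · right
    have a4 := hwge x hx i
    simp only [w, h, if_true] at a4
    omega

lemma brouwer {I : Type*} [Fintype I] [Nonempty I] (f : (I → ℝ) → (I → ℝ)) (hf : Continuous f)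
    (hm : ∀ x ∈ stdSimplex ℝ I, f x ∈ stdSimplex ℝ I) : ∃ x ∈ stdSimplex ℝ I, f x = x := by
  classical
  set n : ℝ := (Fintype.card I : ℝ) with hn
  have approx : ∀ k : ℕ, ∃ x ∈ stdSimplex ℝ I, ∀ i, ∃ y ∈ stdSimplex ℝ I,
      (∀ j, |y j - x j| ≤ n / (k + 1)) ∧ y i ≤ f y i + n / (k + 1) := by
    intro k
    have hk : (0 : ℝ) < k + 1 := by positivity
    let P : Grid I (k + 1) → I → ℝ := fun t i => ((t.1 i : ℕ) : ℝ) / (k + 1)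
    have hP : ∀ t, P t ∈ stdSimplex ℝ I := by
      intro t
      refine ⟨fun i => by positivity, ?_⟩
      simp only [P]
      rw [← Finset.sum_div, div_eq_one_iff_eq hk.ne']
      exact_mod_cast t.2
    have hc : ∀ t, ∃ i, P t i ≤ f (P t) i := by
      intro t
      by_contra hcon
      push Not at hcon
      have := Finset.sum_lt_sum_of_nonempty (s := Finset.univ) Finset.univ_nonempty
        (fun i _ => hcon i)
      rw [(hP t).2, (hm _ (hP t)).2] at this
      exact lt_irrefl _ this
    choose c hc using hc
    obtain ⟨x, hx⟩ := grid_scarf (k + 1) c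
    refine ⟨P x, hP x, fun i => ?_⟩
    rcases hx i with ⟨t, rfl, ht⟩ | h
    · refine ⟨P t, hP t, fun j => ?_, ?_⟩
      · simp only [P]
        rw [← sub_div, abs_div, abs_of_pos hk]
        gcongr
        obtain ⟨a, b⟩ := ht j
        have a' : ((t.1 j : ℕ) : ℝ) ≤ ((x.1 j : ℕ) : ℝ) + n := by rw [hn]; exact_mod_cast a
        have b' : ((x.1 j : ℕ) : ℝ) ≤ ((t.1 j : ℕ) : ℝ) + n := by rw [hn]; exact_mod_cast b
        rw [abs_le]; constructor <;> linarith
      · have := hc t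
        have : 0 ≤ n / (k + 1) := by positivity
        linarith [hc t]
    · refine ⟨P x, hP x, fun j => ?_, ?_⟩
      · simp; positivity
      · have h0 := (hm _ (hP x)).1 i
        have : P x i ≤ n / (k + 1) := by
          simp only [P]
          gcongr
          rw [hn]; exact_mod_cast h
        linarith
  choose x hx y hy hxy hyf using approx
  obtain ⟨z, hz, φ, hφ, hlim⟩ := (isCompact_stdSimplex ℝ I).tendsto_subseq hx
  have h0 : Filter.Tendsto (fun k : ℕ => n / ((k : ℝ) + 1)) Filter.atTop (nhds 0) := by
    have := (tendsto_one_div_add_atTop_nhds_zero_nat (𝕜 := ℝ)).const_mul n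
    simpa [mul_one_div, div_eq_mul_inv] using this
  have h0' := h0.comp hφ.tendsto_atTop
  have hle : ∀ i, z i ≤ f z i := by
    intro i
    have hyl : Filter.Tendsto (fun k => y (φ k) i) Filter.atTop (nhds z) := by
      rw [tendsto_pi_nhds] at hlim ⊢
      intro j
      have hd : Filter.Tendsto (fun k => y (φ k) i j - x (φ k) j) Filter.atTop (nhds 0) :=
        squeeze_zero_norm (fun k => hxy (φ k) i j) h0'
      have := hd.add (hlim j)
      simpa using this
    have l1 := (tendsto_pi_nhds.1 hyl) i
    have l2 := (tendsto_pi_nhds.1 ((hf.tendsto z).comp hyl) i).add h0'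
    rw [add_zero] at l2
    exact le_of_tendsto_of_tendsto' l1 l2 (fun k => hyf (φ k) i)
  refine ⟨z, hz, ?_⟩
  have hs : ∑ i, z i = ∑ i, f z i := by rw [hz.2, (hm z hz).2]
  have := (Finset.sum_eq_sum_iff_of_le (fun i _ => hle i)).1 hs
  funext i
  exact (this i (Finset.mem_univ i)).symm

/-- Brouwer for a product of simplices. -/
lemma brouwer_prod {I : Type*} [Fintype I] [Nonempty I] (S : I → Type*) [∀ i, Fintype (S i)]
    [∀ i, Nonempty (S i)] (F : (∀ i, S i → ℝ) → (∀ i, S i → ℝ)) (hF : Continuous F)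
    (hm : ∀ σ, (∀ i, σ i ∈ stdSimplex ℝ (S i)) → ∀ i, F σ i ∈ stdSimplex ℝ (S i)) :
    ∃ σ, (∀ i, σ i ∈ stdSimplex ℝ (S i)) ∧ F σ = σ := by
  classical
  set n : ℝ := (Fintype.card I : ℝ) with hn
  have hn0 : 0 < n := by rw [hn]; exact_mod_cast Fintype.card_pos
  let M : ((Σ i, S i) → ℝ) → I → ℝ := fun x i => ∑ a, x ⟨i, a⟩
  let ρ : ((Σ i, S i) → ℝ) → ∀ i, S i → ℝ := fun x i a =>
    (x ⟨i, a⟩ + max 0 (1 / n - M x i) / Fintype.card (S i)) / max (M x i) (1 / n)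
  have hpos : ∀ x i, 0 < max (M x i) (1 / n) := fun x i => lt_max_of_lt_right (by positivity)
  have hMc : ∀ i, Continuous fun x => M x i := fun i => by simp only [M]; fun_prop
  have hρc : Continuous ρ := by
    refine continuous_pi fun i => continuous_pi fun a => ?_
    have := hMc i
    refine Continuous.div ?_ (by fun_prop) (fun x => (hpos x i).ne')
    fun_prop
  have hρm : ∀ x ∈ stdSimplex ℝ (Σ i, S i), ∀ i, ρ x i ∈ stdSimplex ℝ (S i) := by
    intro x hx i
    refine ⟨fun a => ?_, ?_⟩
    · have := hx.1 ⟨i, a⟩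
      have h2 : 0 ≤ max 0 (1 / n - M x i) := le_max_left _ _
      exact div_nonneg (by positivity) (hpos x i).le
    · simp only [ρ]
      rw [← Finset.sum_div, div_eq_one_iff_eq (hpos x i).ne', Finset.sum_add_distrib]
      have : (Fintype.card (S i) : ℝ) ≠ 0 := by exact_mod_cast Fintype.card_ne_zero
      rw [Finset.sum_const, Finset.card_univ, nsmul_eq_mul, mul_div_cancel₀ _ this]
      change M x i + _ = _
      rcases le_total (M x i) (1 / n) with h | h
      · rw [max_eq_right h, max_eq_right (by linarith)]; ring
      · rw [max_eq_left h, max_eq_left (by linarith)]; ring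
  have : Nonempty (Σ i, S i) := ⟨⟨Classical.arbitrary I, Classical.arbitrary _⟩⟩
  obtain ⟨x, hx, hfix⟩ := brouwer (fun x p => F (ρ x) p.1 p.2 / n) (by
      have h := hF.comp hρc
      refine continuous_pi fun p => ?_
      have h1 : Continuous fun x => F (ρ x) p.1 p.2 :=
        (continuous_apply p.2).comp ((continuous_apply p.1).comp h)
      exact h1.div_const n) (by
      intro x hx
      have h := hm _ (hρm x hx)
      refine ⟨fun p => div_nonneg ((h p.1).1 p.2) hn0.le, ?_⟩
      rw [← Finset.sum_div, Fintype.sum_sigma, Finset.sum_congr rfl (fun i _ => (h i).2)]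
      simp [← hn, hn0.ne'])
  refine ⟨ρ x, hρm x hx, ?_⟩
  have hv : ∀ i a, x ⟨i, a⟩ = F (ρ x) i a / n := fun i a => (congrFun hfix ⟨i, a⟩).symm
  have hM1 : ∀ i, M x i = 1 / n := by
    intro i
    simp only [M]
    rw [Finset.sum_congr rfl (fun a _ => hv i a), ← Finset.sum_div, (hm _ (hρm x hx) i).2]
  funext i a
  have : ρ x i a = n * x ⟨i, a⟩ := by
    simp only [ρ, hM1]
    simp
    ring
  rw [this, hv]
  field_simp

end ScarfNash

theorem stmt_1 (I : Type) [Fintype I] [Nonempty I] [DecidableEq I]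
    (S : I → Type) [∀ i, Fintype (S i)] [∀ i, Nonempty (S i)]
    (R : (∀ j, S j) → (∀ j, S j))
    (v : I → (∀ j, S j) → ℝ) :
    ∃ σ : ∀ i, S i → ℝ,
      (∀ i, (∀ a, 0 ≤ σ i a) ∧ ∑ a, σ i a = 1) ∧
      (∀ i (τ : S i → ℝ), (∀ a, 0 ≤ τ a) → ∑ a, τ a = 1 →
        ∑ s : ∀ j, S j, (∏ j, Function.update σ i τ j (s j)) * (v i ∘ R) s ≤
          ∑ s : ∀ j, S j, (∏ j, σ j (s j)) * (v i ∘ R) s) := by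
  classical
  let E : I → (∀ j, S j → ℝ) → ℝ := fun i σ => ∑ s : ∀ j, S j, (∏ j, σ j (s j)) * (v i ∘ R) s
  let U : (∀ j, S j → ℝ) → ∀ i, S i → ℝ := fun σ i a =>
    E i (Function.update σ i (Pi.single a 1))
  have hEc : ∀ i, Continuous (E i) := by
    intro i
    simp only [E]
    fun_prop
  have hUc : ∀ i a, Continuous fun σ => U σ i a := by
    intro i a
    exact (hEc i).comp (continuous_id.update i continuous_const)
  -- linearity in own strategy
  have hlin : ∀ i σ (τ : S i → ℝ), E i (Function.update σ i τ) = ∑ a, τ a * U σ i a := by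
    intro i σ τ
    have hp : ∀ (τ : S i → ℝ) (s : ∀ j, S j), (∏ j, Function.update σ i τ j (s j)) =
        τ (s i) * ∏ j ∈ Finset.univ.erase i, σ j (s j) := by
      intro τ s
      rw [← Finset.mul_prod_erase _ _ (Finset.mem_univ i), Function.update_self]
      congr 1
      refine Finset.prod_congr rfl fun j hj => ?_
      rw [Function.update_of_ne (Finset.ne_of_mem_erase hj)]
    simp only [U, E, hp, Finset.mul_sum]
    rw [Finset.sum_comm]
    refine Finset.sum_congr rfl fun s _ => ?_
    rw [Finset.sum_eq_single (s i)]
    · simp; ring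
    · intro b _ hb
      simp [Pi.single_apply, hb.symm]
    · simp
  let g : (∀ j, S j → ℝ) → ∀ i, S i → ℝ := fun σ i a => max 0 (U σ i a - E i σ)
  have hg0 : ∀ σ i a, 0 ≤ g σ i a := fun σ i a => le_max_left _ _
  have hgc : ∀ i a, Continuous fun σ => g σ i a := by
    intro i a
    exact continuous_const.max ((hUc i a).sub (hEc i))
  have hGp : ∀ σ i, 0 < 1 + ∑ a, g σ i a := fun σ i => by
    have := Finset.sum_nonneg (fun a (_ : a ∈ Finset.univ) => hg0 σ i a)
    linarith
  obtain ⟨σ, hσ, hfix⟩ := ScarfNash.brouwer_prod S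
    (fun σ i a => (σ i a + g σ i a) / (1 + ∑ b, g σ i b)) (by
      refine continuous_pi fun i => continuous_pi fun a => ?_
      refine Continuous.div ?_ ?_ (fun σ => (hGp σ i).ne')
      · have h1 : Continuous fun σ : (∀ j, S j → ℝ) => σ i a := by fun_prop
        exact h1.add (hgc i a)
      · exact continuous_const.add (continuous_finsetSum _ fun b _ => hgc i b)) (by
      intro σ hσ i
      refine ⟨fun a => div_nonneg (add_nonneg ((hσ i).1 a) (hg0 σ i a)) (hGp σ i).le, ?_⟩
      rw [← Finset.sum_div, div_eq_one_iff_eq (hGp σ i).ne', Finset.sum_add_distrib, (hσ i).2])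
  refine ⟨σ, fun i => ⟨(hσ i).1, (hσ i).2⟩, fun i τ hτ hτ1 => ?_⟩
  change E i (Function.update σ i τ) ≤ E i σ
  have hfe : ∀ a, σ i a * ∑ b, g σ i b = g σ i a := by
    intro a
    have h := congrFun (congrFun hfix i) a
    rw [div_eq_iff (hGp σ i).ne'] at h
    linarith
  have hE : E i σ = ∑ a, σ i a * U σ i a := by
    rw [← hlin, Function.update_eq_self]
  have hz : ∑ a, σ i a * (U σ i a - E i σ) = 0 := by
    simp only [mul_sub, Finset.sum_sub_distrib, ← Finset.sum_mul]
    rw [← hE, (hσ i).2]; ring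
  have hsq : ∑ a, g σ i a ^ 2 = 0 := by
    have : ∀ a, g σ i a ^ 2 = (∑ b, g σ i b) * (σ i a * (U σ i a - E i σ)) := by
      intro a
      have h1 : g σ i a ^ 2 = g σ i a * (U σ i a - E i σ) := by
        simp only [g]
        rcases le_total 0 (U σ i a - E i σ) with h | h
        · rw [max_eq_right h]; ring
        · rw [max_eq_left h]; ring
      rw [h1]
      nth_rewrite 1 [← hfe a]
      ring
    rw [Finset.sum_congr rfl (fun a _ => this a), ← Finset.mul_sum, hz, mul_zero]
  have hg : ∀ a, U σ i a ≤ E i σ := by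
    intro a
    have h := (Finset.sum_eq_zero_iff_of_nonneg (fun a _ => sq_nonneg (g σ i a))).1 hsq a
      (Finset.mem_univ a)
    have h' : g σ i a = 0 := by simpa using h
    have : U σ i a - E i σ ≤ g σ i a := le_max_right _ _
    linarith
  rw [hlin]
  calc ∑ a, τ a * U σ i a ≤ ∑ a, τ a * E i σ :=
        Finset.sum_le_sum fun a _ => mul_le_mul_of_nonneg_left (hg a) (hτ a)
    _ = E i σ := by rw [← Finset.sum_mul, hτ1, one_mul]
end

section
/- A finite family of finite games has a family of mixed strategy Nash equilibria: if Λ is a nonempty finite index set and for each λ ∈ Λ there is a finite game Γ(λ) (a nonempty finite set of players I λ, nonempty finite strategy sets S λ i, and payoff functions u λ i : (Π j, S λ j) → ℝ), then there exists a function assigning to each λ ∈ Λ a mixed strategy profile σ*(λ) that is a Nash equilibrium of Γ(λ). -/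
open MeasureTheory Set Metric
open scoped NNReal

section Brouwer
variable {E : Type*} [NormedAddCommGroup E] [InnerProductSpace ℝ E] [FiniteDimensional ℝ E]

lemma bij_small {u : E → E} {K : ℝ≥0} (hu : LipschitzWith K u) {t : ℝ≥0} (ht : t * K < 1) :
    Function.Bijective (fun x => x + (t : ℝ) • u x) := by
  have h1 : ApproximatesLinearOn (fun x => x + (t : ℝ) • u x)
      ((ContinuousLinearEquiv.refl ℝ E : E ≃L[ℝ] E) : E →L[ℝ] E) univ (t * K) := by
    intro x _ y _
    have : x + (t : ℝ) • u x - (y + (t : ℝ) • u y) -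
      ((ContinuousLinearEquiv.refl ℝ E : E ≃L[ℝ] E) : E →L[ℝ] E) (x - y) = (t : ℝ) • (u x - u y) := by
      simp [smul_sub]; abel
    rw [this, norm_smul]
    have := hu.norm_sub_le x y
    simp only [NNReal.coe_mul, Real.norm_eq_abs, NNReal.abs_eq]
    rw [mul_assoc]
    gcongr
  have h2 : Subsingleton E ∨ t * K < ‖((ContinuousLinearEquiv.refl ℝ E).symm : E →L[ℝ] E)‖₊⁻¹ := by
    rcases subsingleton_or_nontrivial E with h | h
    · exact Or.inl h
    · right
      have : ‖((ContinuousLinearEquiv.refl ℝ E).symm : E →L[ℝ] E)‖₊ = 1 := by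
        ext; exact ContinuousLinearMap.norm_id
      rw [this]; simpa using ht
  exact ⟨(injOn_univ.1 (h1.injOn h2)), h1.surjective h2⟩

variable [MeasurableSpace E] [BorelSpace E]

lemma integral_small {u : E → E} {K : ℝ≥0} (hu : LipschitzWith K u) {R : ℝ}
    (h0 : ∀ x, x ∉ ball (0:E) R → u x = 0) (hd : ∀ x ∈ ball (0:E) R, DifferentiableAt ℝ u x) :
    ∃ ε : ℝ, 0 < ε ∧ ∀ t : ℝ, 0 < t → t < ε →
      IntegrableOn (fun x => (1 + t • fderiv ℝ u x).det) (ball (0:E) R) ∧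
      ∫ x in ball (0:E) R, (1 + t • fderiv ℝ u x).det = volume.real (ball (0:E) R) := by
  have hc : ∀ᶠ A in nhds (1 : E →L[ℝ] E), 0 < A.det := by
    have := (ContinuousLinearMap.continuous_det (𝕜 := ℝ) (E := E)).continuousAt (x := 1)
    refine this.eventually (lt_mem_nhds ?_)
    have : (1 : E →L[ℝ] E).det = 1 := by simp [ContinuousLinearMap.det]
    show 0 < (1 : E →L[ℝ] E).det
    rw [this]; exact one_pos
  obtain ⟨δ, hδ, hc⟩ := Metric.eventually_nhds_iff.1 hc
  refine ⟨min 1 δ / (K + 1), by positivity, fun t ht htε => ?_⟩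
  have hK : (0:ℝ) < K + 1 := by positivity
  have htK : t * K < min 1 δ := by
    rw [lt_div_iff₀ hK] at htε
    nlinarith
  lift t to ℝ≥0 using ht.le
  have hbij := bij_small hu (t := t) (by
    have := htK.trans_le (min_le_left _ _); exact_mod_cast this)
  have himg : (fun x => x + (t : ℝ) • u x) '' ball (0:E) R = ball 0 R := by
    apply Subset.antisymm
    · rintro _ ⟨x, hx, rfl⟩
      by_contra hn
      have h1 := h0 _ hn
      have : x + (t : ℝ) • u x = x := hbij.1 (by simp only [h1, smul_zero, add_zero])
      simp only [this] at hn
      exact hn hx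
    · intro y hy
      obtain ⟨x, rfl⟩ := hbij.2 y
      by_contra hn
      have hx : x ∉ ball (0:E) R := fun h => hn ⟨x, h, rfl⟩
      apply hx
      simpa [h0 x hx] using hy
  have hder : ∀ x ∈ ball (0:E) R, HasFDerivWithinAt (fun x => x + (t : ℝ) • u x)
      (1 + (t : ℝ) • fderiv ℝ u x) (ball 0 R) x := by
    intro x hx
    exact ((hasFDerivAt_id x).add ((hd x hx).hasFDerivAt.const_smul (t:ℝ))).hasFDerivWithinAt
  have hpos : ∀ x, 0 < (1 + (t : ℝ) • fderiv ℝ u x).det := by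
    intro x
    apply hc
    rw [dist_eq_norm, add_sub_cancel_left, norm_smul]
    have := norm_fderiv_le_of_lipschitz ℝ hu (x₀ := x)
    have h2 := htK.trans_le (min_le_right _ _)
    refine lt_of_le_of_lt ?_ h2
    simp only [Real.norm_eq_abs, NNReal.abs_eq]
    gcongr
  have hI := integral_image_eq_integral_abs_det_fderiv_smul volume measurableSet_ball hder
    hbij.1.injOn (fun _ => (1:ℝ))
  have hJ := (integrableOn_image_iff_integrableOn_abs_det_fderiv_smul volume measurableSet_ball hder
    hbij.1.injOn (fun _ => (1:ℝ))).1 (by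
      rw [himg]; exact integrableOn_const (measure_ball_lt_top).ne)
  rw [himg] at hI
  simp only [abs_of_pos (hpos _), smul_eq_mul, mul_one] at hI hJ
  refine ⟨hJ, ?_⟩
  rw [← hI]; simp

lemma det_poly (A : E →L[ℝ] E) : ∃ p : Polynomial ℝ, p.natDegree ≤ Module.finrank ℝ E ∧
    ∀ t : ℝ, (1 + t • A).det = p.eval t := by
  classical
  let b := Module.finBasis ℝ E
  let M := LinearMap.toMatrix b b (A : E →ₗ[ℝ] E)
  refine ⟨_, (Polynomial.natDegree_det_X_add_C_le M 1).trans (by simp), fun t => ?_⟩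
  rw [← Polynomial.coe_evalRingHom, RingHom.map_det, ContinuousLinearMap.det, ← LinearMap.det_toMatrix b]
  congr 1
  have : ((1 + t • A : E →L[ℝ] E) : E →ₗ[ℝ] E) = 1 + t • (A : E →ₗ[ℝ] E) := rfl
  rw [this, map_add, map_smul, LinearMap.toMatrix_one]
  ext i j
  simp [Matrix.one_apply, M]
  split_ifs <;> simp <;> ring

lemma integral_det_one {u : E → E} {K : ℝ≥0} (hu : LipschitzWith K u) {R : ℝ}
    (h0 : ∀ x, x ∉ ball (0:E) R → u x = 0) (hd : ∀ x ∈ ball (0:E) R, DifferentiableAt ℝ u x) :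
      ∫ x in ball (0:E) R, (1 + fderiv ℝ u x).det = volume.real (ball (0:E) R) := by
  classical
  obtain ⟨ε, hε, h⟩ := integral_small hu h0 hd
  set n := Module.finrank ℝ E
  let s := Finset.range (n+1)
  let v : ℕ → ℝ := fun i => ε / (i + 2)
  have hv : Function.Injective v := by
    intro i j hij
    have hi : (0:ℝ) < (i:ℝ) + 2 := by positivity
    have hj : (0:ℝ) < (j:ℝ) + 2 := by positivity
    simp only [v] at hij
    field_simp at hij
    have : (i:ℝ) = j := by linarith
    exact_mod_cast this
  have hvpos : ∀ i, 0 < v i := fun i => by simp only [v]; positivity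
  have hvlt : ∀ i, v i < ε := fun i => by
    simp only [v]
    apply div_lt_self hε
    have : (0:ℝ) ≤ i := by positivity
    linarith
  have key : ∀ A : E →L[ℝ] E, (1 + A).det =
      ∑ i ∈ s, (1 + v i • A).det * (Lagrange.basis s v i).eval 1 := by
    intro A
    obtain ⟨p, hp, hpe⟩ := det_poly A
    have h1 := hpe 1
    rw [one_smul] at h1
    rw [h1, Lagrange.eq_interpolate (f := p) (s := s) (v := v) hv.injOn
      (by
        refine (Polynomial.degree_le_of_natDegree_le hp).trans_lt ?_
        simp only [s, Finset.card_range]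
        exact_mod_cast Nat.lt_succ_self _), Lagrange.interpolate_apply, Polynomial.eval_finsetSum]
    simp [hpe]
  have hkey : (fun x => (1 + fderiv ℝ u x).det) = fun x =>
      ∑ i ∈ s, (1 + v i • fderiv ℝ u x).det * (Lagrange.basis s v i).eval 1 :=
    funext fun x => key _
  rw [hkey]
  rw [integral_finsetSum]
  · simp_rw [integral_mul_const]
    rw [Finset.sum_congr rfl (fun i _ => by rw [(h (v i) (hvpos i) (hvlt i)).2]), ← Finset.mul_sum,
      ← Polynomial.eval_finsetSum, Lagrange.sum_basis hv.injOn (by simp [s])]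
    simp
  · intro i _
    exact (h (v i) (hvpos i) (hvlt i)).1.mul_const _

/-- No-retraction. -/
lemma no_retract {g : E → E} {R : ℝ} (hR : 0 < R) (hg : ∀ x ∈ closedBall (0:E) R, ContDiffAt ℝ 1 g x)
    (hn : ∀ x ∈ closedBall (0:E) R, ‖g x‖ = R) (hs : ∀ x ∈ sphere (0:E) R, g x = x) : False := by
  classical
  let u : E → E := fun x => if x ∈ ball (0:E) R then g x - x else 0
  have hu0 : ∀ x, x ∉ ball (0:E) R → u x = 0 := fun x hx => by simp only [u, if_neg hx]
  have hu1 : ∀ x ∈ closedBall (0:E) R, u x = g x - x := fun x hx => by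
    by_cases h : x ∈ ball (0:E) R
    · simp only [u, if_pos h]
    · rw [hu0 x h, hs x, sub_self]
      simp at h hx ⊢; linarith
  obtain ⟨K, hK⟩ : ∃ K, LipschitzOnWith K u (closedBall (0:E) R) := by
    apply LocallyLipschitzOn.exists_lipschitzOnWith_of_compact (isCompact_closedBall _ _)
    apply ContDiffOn.locallyLipschitzOn (convex_closedBall _ _)
    refine ContDiffOn.congr (f := fun x => g x - x) ?_ hu1
    intro x hx
    exact ((hg x hx).sub contDiffAt_id).contDiffWithinAt
  have hmix : ∀ x ∈ ball (0:E) R, ∀ y, y ∉ ball (0:E) R → dist (u x) (u y) ≤ K * dist x y := by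
    intro x hx y hy
    have hx' : ‖x‖ < R := by simpa using hx
    have hy' : R ≤ ‖y‖ := by simpa using hy
    obtain ⟨c, hc, hcR⟩ : ∃ c ∈ Icc (0:ℝ) 1, ‖AffineMap.lineMap x y c‖ = R := by
      have := intermediate_value_Icc (f := fun c : ℝ => ‖(AffineMap.lineMap x y c : E)‖) zero_le_one
        (by
          apply Continuous.continuousOn
          have : Continuous (fun c : ℝ => (AffineMap.lineMap x y c : E)) := AffineMap.lineMap_continuous
          exact this.norm)
      have hm := this (show R ∈ _ by simp only [AffineMap.lineMap_apply_zero, AffineMap.lineMap_apply_one]; exact ⟨hx'.le, hy'⟩)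
      exact hm
    set z : E := AffineMap.lineMap x y c
    have hz : z ∉ ball (0:E) R := by simp [hcR]
    have h1 := hK.dist_le_mul x (ball_subset_closedBall hx) z (by simp [hcR])
    rw [hu0 y hy, ← hu0 z hz]
    refine h1.trans ?_
    gcongr
    rw [dist_left_lineMap, Real.norm_eq_abs, abs_of_nonneg hc.1]
    exact mul_le_of_le_one_left dist_nonneg hc.2
  have hL : LipschitzWith K u := by
    apply LipschitzWith.of_dist_le_mul
    intro x y
    by_cases hx : x ∈ ball (0:E) R <;> by_cases hy : y ∈ ball (0:E) R
    · exact hK.dist_le_mul x (ball_subset_closedBall hx) y (ball_subset_closedBall hy)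
    · exact hmix x hx y hy
    · rw [dist_comm, dist_comm x]; exact hmix y hy x hx
    · rw [hu0 x hx, hu0 y hy, dist_self]; positivity
  have hdg : ∀ x ∈ ball (0:E) R, DifferentiableAt ℝ g x := fun x hx =>
    (hg x (ball_subset_closedBall hx)).differentiableAt one_ne_zero
  have hfd : ∀ x ∈ ball (0:E) R, HasFDerivAt u (fderiv ℝ g x - 1) x := by
    intro x hx
    refine HasFDerivAt.congr_of_eventuallyEq ((hdg x hx).hasFDerivAt.sub (hasFDerivAt_id x)) ?_
    filter_upwards [isOpen_ball.mem_nhds hx] with y hy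
    exact hu1 y (ball_subset_closedBall hy)
  have hI := integral_det_one hL hu0 (fun x hx => (hfd x hx).differentiableAt)
  have hz : ∫ x in ball (0:E) R, (1 + fderiv ℝ u x).det = 0 := by
    apply setIntegral_eq_zero_of_forall_eq_zero
    intro x hx
    rw [(hfd x hx).fderiv, add_sub_cancel]
    by_contra hdet
    have hsurj : Function.Surjective (fderiv ℝ g x) := by
      have : IsUnit (fderiv ℝ g x : E →ₗ[ℝ] E) := by
        rw [LinearMap.isUnit_iff_isUnit_det]
        exact isUnit_iff_ne_zero.2 hdet
      exact ((Module.End.isUnit_iff _).1 this).2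
    obtain ⟨w, hw⟩ := hsurj (g x)
    have h1 : HasFDerivAt (fun y => inner ℝ (g y) (g y)) _ x :=
      (hdg x hx).hasFDerivAt.inner ℝ (hdg x hx).hasFDerivAt
    have h2 : HasFDerivAt (fun y => inner ℝ (g y) (g y)) (0 : E →L[ℝ] ℝ) x := by
      refine HasFDerivAt.congr_of_eventuallyEq (hasFDerivAt_const (R^2) x) ?_
      filter_upwards [isOpen_ball.mem_nhds hx] with y hy
      rw [real_inner_self_eq_norm_sq, hn y (ball_subset_closedBall hy)]
    have h3 := DFunLike.congr_fun (h1.unique h2) w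
    simp [hw] at h3
    have := hn x (ball_subset_closedBall hx)
    rw [h3, norm_zero] at this
    exact hR.ne this
  rw [hz] at hI
  have : 0 < volume.real (ball (0:E) R) := by
    rw [measureReal_def]
    exact ENNReal.toReal_pos (measure_ball_pos _ _ hR).ne' measure_ball_lt_top.ne
  linarith

end Brouwer

section Brouwer2
variable {E : Type*} [NormedAddCommGroup E] [InnerProductSpace ℝ E] [FiniteDimensional ℝ E]

lemma brouwer {f : E → E} (hf : Continuous f) {M : ℝ} (hM : 0 < M) (hb : ∀ x, ‖f x‖ ≤ M) :
    ∃ x, f x = x := by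
  let _ : MeasurableSpace E := borel E
  have _ : BorelSpace E := ⟨rfl⟩
  by_contra! hne
  let χ : ContDiffBump (0:E) := ⟨M, M+1, hM, by linarith⟩
  set R := M + 1
  have hR : 0 < R := by positivity
  let G : E → E := fun x => χ x • f x
  have hG : Continuous G := χ.continuous.smul hf
  have hGne : ∀ x, x - G x ≠ 0 := by
    intro x hx
    have hx : x = χ x • f x := sub_eq_zero.1 hx
    have : ‖x‖ ≤ M := by
      rw [hx, norm_smul, Real.norm_eq_abs, abs_of_nonneg χ.nonneg]
      nlinarith [χ.le_one (x := x), χ.nonneg (x := x), hb x, norm_nonneg (f x)]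
    have h1 : χ x = 1 := χ.one_of_mem_closedBall (by simpa using this)
    rw [h1, one_smul] at hx
    exact hne x hx.symm
  obtain ⟨H, hH, hHa, hHs⟩ := hG.exists_contDiff_approx 1 (ε := fun x => ‖x - G x‖) (by fun_prop)
    (fun x => norm_pos_iff.2 (hGne x))
  have hHne : ∀ x, x - H x ≠ 0 := by
    intro x hx
    have := hHa x
    rw [← sub_eq_zero.1 hx, dist_eq_norm] at this
    exact lt_irrefl _ this
  refine no_retract (g := fun x => (R / ‖x - H x‖) • (x - H x)) hR ?_ ?_ ?_
  · intro x _
    have h1 : ContDiffAt ℝ 1 (fun x => x - H x) x := contDiffAt_id.sub hH.contDiffAt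
    exact ((contDiffAt_const.div (h1.norm ℝ (hHne x)) (norm_ne_zero_iff.2 (hHne x)))).smul h1
  · intro x _
    have := norm_pos_iff.2 (hHne x)
    rw [norm_smul, norm_div, norm_norm, Real.norm_eq_abs, abs_of_pos hR]
    field_simp
  · intro x hx
    have hx : ‖x‖ = R := by simpa using hx
    have h0 : H x = 0 := by
      by_contra h
      apply hHs h
      have : χ x = 0 := χ.zero_of_le_dist (by simp [hx, χ, R])
      simp [G, this]
    simp only [h0, sub_zero, hx]
    rw [div_self hR.ne', one_smul]
end Brouwer2

section Player
variable {S : Type*} [Fintype S]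

noncomputable def ret (x : S → ℝ) (a : S) : ℝ :=
  (max (x a) 0 + max (1 - ∑ b, max (x b) 0) 0 / Fintype.card S) / max 1 (∑ b, max (x b) 0)

noncomputable def nstep (x w : S → ℝ) (a : S) : ℝ :=
  (x a + max (w a - ∑ b, x b * w b) 0) / (1 + ∑ c, max (w c - ∑ b, x b * w b) 0)

lemma ret_nonneg (x : S → ℝ) (a : S) : 0 ≤ ret x a := by
  unfold ret; positivity

lemma ret_sum [Nonempty S] (x : S → ℝ) : ∑ a, ret x a = 1 := by
  unfold ret
  rw [← Finset.sum_div, Finset.sum_add_distrib]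
  set P := ∑ b, max (x b) 0
  have hc : (Fintype.card S : ℝ) ≠ 0 := by simp
  simp only [Finset.sum_const, Finset.card_univ, nsmul_eq_mul]
  rw [mul_div_cancel₀ _ hc]
  have : P + max (1 - P) 0 = max 1 P := by
    rcases le_total 1 P with h | h
    · rw [max_eq_right h, max_eq_right (by linarith)]; ring
    · rw [max_eq_left h, max_eq_left (by linarith)]; ring
  rw [this]
  exact div_self (by positivity)

lemma ret_id (x : S → ℝ) (h : ∀ a, 0 ≤ x a) (h1 : ∑ a, x a = 1) : ret x = x := by
  funext a
  unfold ret
  simp only [max_eq_left (h _), h1]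
  simp

lemma nstep_nonneg {x : S → ℝ} (h : ∀ a, 0 ≤ x a) (w : S → ℝ) (a : S) : 0 ≤ nstep x w a := by
  unfold nstep
  have := h a
  have : 0 ≤ ∑ c, max (w c - ∑ b, x b * w b) 0 := Finset.sum_nonneg fun _ _ => le_max_right _ _
  positivity

lemma nstep_sum {x : S → ℝ} (h1 : ∑ a, x a = 1) (w : S → ℝ) : ∑ a, nstep x w a = 1 := by
  unfold nstep
  have : 0 ≤ ∑ c, max (w c - ∑ b, x b * w b) 0 := Finset.sum_nonneg fun _ _ => le_max_right _ _
  rw [← Finset.sum_div, Finset.sum_add_distrib, h1]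
  exact div_self (by positivity)

lemma nstep_fix {x w : S → ℝ} (h : ∀ a, 0 ≤ x a) (h1 : ∑ a, x a = 1) (hf : nstep x w = x) (a : S) :
    w a ≤ ∑ b, x b * w b := by
  set U := ∑ b, x b * w b with hU
  set D := ∑ c, max (w c - U) 0 with hD
  have hD0 : 0 ≤ D := Finset.sum_nonneg fun _ _ => le_max_right _ _
  obtain ⟨b, hb, hwb⟩ : ∃ b, 0 < x b ∧ w b ≤ U := by
    by_contra! hc
    have h2 : ∑ b, x b * U < ∑ b, x b * w b := by
      apply Finset.sum_lt_sum
      · intro b _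
        rcases (h b).eq_or_lt with h0 | h0
        · rw [← h0]; simp
        · exact mul_le_mul_of_nonneg_left (hc b h0).le h0.le
      · by_contra! hn
        have : ∑ a, x a ≤ 0 := Finset.sum_nonpos fun b hb => by
          by_contra! h0
          have := hn b hb
          have := mul_lt_mul_of_pos_left (hc b h0) h0
          linarith
        linarith
    rw [← Finset.sum_mul, h1, one_mul] at h2
    exact lt_irrefl _ h2
  have hbf : (x b + max (w b - U) 0) / (1 + D) = x b := congrFun hf b
  rw [max_eq_right (by linarith), add_zero, div_eq_iff (by positivity)] at hbf
  have hDz : D = 0 := by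
    have : x b * D = 0 := by linarith
    rcases mul_eq_zero.1 this with h | h
    · exact absurd h hb.ne'
    · exact h
  have := (Finset.sum_eq_zero_iff_of_nonneg (fun _ _ => le_max_right _ _)).1 hDz a (Finset.mem_univ a)
  have := max_eq_right_iff.1 this
  linarith
end Player

section Game
variable {I : Type} [Fintype I] [DecidableEq I] {S : I → Type} [∀ i, Fintype (S i)]

open Classical in
noncomputable def marg (u : I → (∀ j, S j) → ℝ) (σ : ∀ i, S i → ℝ) (i : I) (a : S i) : ℝ :=
  ∑ s : ∀ j, S j, if s i = a then (∏ j ∈ Finset.univ.erase i, σ j (s j)) * u i s else 0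

lemma payoff_update (u : I → (∀ j, S j) → ℝ) (σ : ∀ i, S i → ℝ) (i : I) (τ : S i → ℝ) :
    ∑ s : ∀ j, S j, (∏ j, Function.update σ i τ j (s j)) * u i s = ∑ a, τ a * marg u σ i a := by
  classical
  unfold marg
  simp_rw [Finset.mul_sum]
  rw [Finset.sum_comm]
  refine Finset.sum_congr rfl fun s _ => ?_
  simp only [mul_ite, mul_zero, Finset.sum_ite_eq, Finset.mem_univ, if_true]
  rw [← Finset.mul_prod_erase _ _ (Finset.mem_univ i), Function.update_self, mul_assoc]
  congr 2
  refine Finset.prod_congr rfl fun j hj => ?_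
  rw [Function.update_of_ne (Finset.ne_of_mem_erase hj)]

lemma nash_exists [∀ i, Nonempty (S i)] (u : I → (∀ j, S j) → ℝ) :
    ∃ σ : ∀ i, S i → ℝ, (∀ i, (∀ a, 0 ≤ σ i a) ∧ ∑ a, σ i a = 1) ∧
        (∀ i (τ : S i → ℝ), (∀ a, 0 ≤ τ a) → ∑ a, τ a = 1 →
          ∑ s : ∀ j, S j, (∏ j, Function.update σ i τ j (s j)) * u i s ≤
            ∑ s : ∀ j, S j, (∏ j, σ j (s j)) * u i s) := by
  classical
  let r : EuclideanSpace ℝ (Σ i, S i) → ∀ i, S i → ℝ := fun x i => ret (fun a => x ⟨i, a⟩)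
  let N : (∀ i, S i → ℝ) → ∀ i, S i → ℝ := fun σ i => nstep (σ i) (marg u σ i)
  let f : EuclideanSpace ℝ (Σ i, S i) → EuclideanSpace ℝ (Σ i, S i) := fun x =>
    WithLp.toLp 2 (fun p => N (r x) p.1 p.2)
  have hr : Continuous r := by
    refine continuous_pi fun i => continuous_pi fun a => ?_
    simp only [r, ret]
    refine Continuous.div (by fun_prop) (by fun_prop) fun x => by positivity
  have hN : Continuous N := by
    have hm : ∀ i a, Continuous fun σ : ∀ i, S i → ℝ => marg u σ i a := by
      intro i a
      unfold marg
      refine continuous_finsetSum _ fun s _ => ?_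
      split_ifs
      · fun_prop
      · fun_prop
    refine continuous_pi fun i => continuous_pi fun a => ?_
    simp only [N, nstep]
    refine Continuous.div (by fun_prop) (by fun_prop) fun σ => ?_
    have : 0 ≤ ∑ c, max (marg u σ i c - ∑ b, σ i b * marg u σ i b) 0 :=
      Finset.sum_nonneg fun _ _ => le_max_right _ _
    positivity
  have hf : Continuous f := by
    have h := hN.comp hr
    refine (PiLp.continuous_toLp 2 _).comp (continuous_pi fun p => ?_)
    exact (continuous_apply p.2).comp ((continuous_apply p.1).comp h)
  have h0 : ∀ x i a, 0 ≤ N (r x) i a := fun x i a => nstep_nonneg (fun _ => ret_nonneg _ _) _ _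
  have h1 : ∀ x i, ∑ a, N (r x) i a = 1 := fun x i => nstep_sum (ret_sum _) _
  have hle : ∀ x i a, N (r x) i a ≤ 1 := fun x i a => by
    rw [← h1 x i]
    exact Finset.single_le_sum (fun b _ => h0 x i b) (Finset.mem_univ a)
  obtain ⟨x, hx⟩ := brouwer hf (M := √(Fintype.card (Σ i, S i)) + 1) (by positivity) (by
    intro x
    rw [EuclideanSpace.norm_eq]
    refine le_trans (Real.sqrt_le_sqrt ?_) (le_add_of_nonneg_right zero_le_one)
    calc ∑ p, ‖f x p‖ ^ 2 ≤ ∑ p : (Σ i, S i), (1:ℝ) := by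
          refine Finset.sum_le_sum fun p _ => ?_
          have a1 := h0 x p.1 p.2
          have a2 := hle x p.1 p.2
          show ‖N (r x) p.1 p.2‖ ^ 2 ≤ 1
          rw [Real.norm_eq_abs, abs_of_nonneg a1]
          nlinarith
      _ = _ := by simp)
  have hxi : ∀ i, (fun a => x ⟨i, a⟩) = N (r x) i := fun i => by
    funext a
    exact (congrArg (fun y : EuclideanSpace ℝ (Σ i, S i) => y ⟨i, a⟩) hx).symm
  have hrx : ∀ i, r x i = N (r x) i := fun i => by
    show ret (fun a => x ⟨i, a⟩) = _
    rw [hxi i]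
    exact ret_id _ (h0 x i) (h1 x i)
  have g0 : ∀ i a, 0 ≤ r x i a := fun i a => ret_nonneg _ _
  have g1 : ∀ i, ∑ a, r x i a = 1 := fun i => ret_sum _
  refine ⟨r x, fun i => ⟨g0 i, g1 i⟩, fun i τ t0 t1 => ?_⟩
  have hp := payoff_update u (r x) i (r x i)
  rw [Function.update_eq_self] at hp
  rw [payoff_update, hp]
  have hfix := nstep_fix (g0 i) (g1 i) (hrx i).symm
  calc ∑ a, τ a * marg u (r x) i a ≤ ∑ a, τ a * ∑ b, r x i b * marg u (r x) i b :=
        Finset.sum_le_sum fun a _ => mul_le_mul_of_nonneg_left (hfix a) (t0 a)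
    _ = _ := by rw [← Finset.sum_mul, t1, one_mul]
end Game

/-- A finite family of finite games has a family of mixed strategy Nash equilibria. -/
theorem stmt_2 (Λ : Type) [Fintype Λ] [Nonempty Λ]
    (I : Λ → Type) [∀ l, Fintype (I l)] [∀ l, Nonempty (I l)] [∀ l, DecidableEq (I l)]
    (S : ∀ l, I l → Type) [∀ l i, Fintype (S l i)] [∀ l i, Nonempty (S l i)]
    (u : ∀ l, I l → (∀ j, S l j) → ℝ) :
    ∃ σ : ∀ l, ∀ i, S l i → ℝ,
      ∀ l,
        (∀ i, (∀ a, 0 ≤ σ l i a) ∧ ∑ a, σ l i a = 1) ∧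
        (∀ i (τ : S l i → ℝ), (∀ a, 0 ≤ τ a) → ∑ a, τ a = 1 →
          ∑ s : ∀ j, S l j, (∏ j, Function.update (σ l) i τ j (s j)) * u l i s ≤
            ∑ s : ∀ j, S l j, (∏ j, σ l j (s j)) * u l i s) := by
  choose σ hσ using fun l => nash_exists (u l)
  exact ⟨σ, hσ⟩
end

section
/- Every mixture over the two High strategies is a mixed Nash equilibrium of the four-strategy coalition-formation Prisoner's Dilemma game: for all real numbers p, q ∈ [0, 1], the mixed profile in which player 1 plays strategy 1 with probability p and strategy 3 with probability 1 − p (and strategies 0, 2 with probability 0), and player 2 plays strategy 1 with probability q and strategy 3 with probability 1 − q (and strategies 0, 2 with probability 0), is a mixed Nash equilibrium. -/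
/-- Payoff of player 1 in the four-strategy coalition-formation Prisoner's Dilemma:
strategies `0, 2` are Low, `1, 3` are High. -/
noncomputable def u1 (i j : Fin 4) : ℝ :=
  if i = 1 ∨ i = 3 then (if j = 1 ∨ j = 3 then -2 else 3)
  else (if j = 1 ∨ j = 3 then -5 else 0)

/-- Payoff of player 2. -/
noncomputable def u2 (i j : Fin 4) : ℝ := u1 j i

/-- Every mixture over the two High strategies is a mixed Nash equilibrium of the
four-strategy coalition-formation Prisoner's Dilemma game. -/
theorem stmt_11 (p q : ℝ) (hp : p ∈ Set.Icc (0 : ℝ) 1) (hq : q ∈ Set.Icc (0 : ℝ) 1)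
    (σ1 σ2 : Fin 4 → ℝ)
    (hσ1 : σ1 = fun i => if i = 1 then p else if i = 3 then 1 - p else 0)
    (hσ2 : σ2 = fun j => if j = 1 then q else if j = 3 then 1 - q else 0) :
    (∀ τ : Fin 4 → ℝ, (∀ a, 0 ≤ τ a) → ∑ a, τ a = 1 →
      ∑ i : Fin 4, ∑ j : Fin 4, τ i * σ2 j * u1 i j ≤
        ∑ i : Fin 4, ∑ j : Fin 4, σ1 i * σ2 j * u1 i j) ∧
    (∀ τ : Fin 4 → ℝ, (∀ a, 0 ≤ τ a) → ∑ a, τ a = 1 →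
      ∑ i : Fin 4, ∑ j : Fin 4, σ1 i * τ j * u2 i j ≤
        ∑ i : Fin 4, ∑ j : Fin 4, σ1 i * σ2 j * u2 i j) := by
  subst hσ1 hσ2
  have e10 : (1 : Fin 4) ≠ 0 := by decide
  have e20 : (2 : Fin 4) ≠ 1 := by decide
  have e23 : (2 : Fin 4) ≠ 3 := by decide
  have e31 : (3 : Fin 4) ≠ 1 := by decide
  have e03 : (0 : Fin 4) ≠ 3 := by decide
  constructor
  · intro τ h0 h1
    have a0 := h0 0
    have a2 := h0 2
    simp only [Fin.sum_univ_four] at h1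
    simp [Fin.sum_univ_four, u1, e20, e23, e31, e03]
    linarith
  · intro τ h0 h1
    have a0 := h0 0
    have a2 := h0 2
    simp only [Fin.sum_univ_four] at h1
    simp [Fin.sum_univ_four, u2, u1, e20, e23, e31, e03]
    linarith
end
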